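/- Let s > 5/2. There is a constant C = C(s) > 0 such that for all ε ∈ (0,1) and all u ∈ H^s(𝕋): |(T̃_ε(u ∂_x u), T̃_ε u)_{H^s}| ≤ C ‖∂_x u‖_{L^∞} (‖u‖_{H^s} ‖T̃_ε u‖_{H^s} + ‖T̃_ε u‖²_{H^s}). -/

import Mathlib

noncomputable section
open scoped BigOperators

/-- A (complex-valued) function on the torus `𝕋 = ℝ/2πℤ`, represented by its sequence of
Fourier coefficients `f̂ : ℤ → ℂ`. -/
abbrev FC := ℤ → ℂ

namespace FC

/-- The Sobolev weight `(1+k²)^s`. -/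
def wt (s : ℝ) (k : ℤ) : ℝ := (1 + (k : ℝ) ^ 2) ^ s

/-- `c` represents a function belonging to the Sobolev space `H^s(𝕋)`. -/
def memHs (s : ℝ) (c : FC) : Prop := Summable fun k : ℤ => wt s k * ‖c k‖ ^ 2

/-- The `H^s(𝕋)` norm: `‖f‖²_{H^s} = Σ_{k∈ℤ} (1+k²)^s |f̂(k)|²`. -/
def hsNorm (s : ℝ) (c : FC) : ℝ := Real.sqrt (∑' k : ℤ, wt s k * ‖c k‖ ^ 2)

/-- The `H^s(𝕋)` inner product `(f,g)_{H^s} = Σ_{k∈ℤ} (1+k²)^s f̂(k) conj(ĝ(k))`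
(its real part; the sum is real for real-valued functions). -/
def hsInner (s : ℝ) (c d : FC) : ℝ :=
  (∑' k : ℤ, ((wt s k : ℂ) * (c k * (starRingEnd ℂ) (d k)))).re

/-- `c` represents a real-valued function (conjugate-symmetric coefficients). -/
def isReal (c : FC) : Prop := ∀ k : ℤ, c (-k) = (starRingEnd ℂ) (c k)

/-- The derivative `∂ₓ`, i.e. the Fourier multiplier `ik`. -/
def D1 (c : FC) : FC := fun k => Complex.I * (k : ℂ) * c k

/-- The pointwise product of functions, i.e. convolution of Fourier coefficients. -/
def mul (c d : FC) : FC := fun k => ∑' j : ℤ, c j * d (k - j)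

/-- The represented function, evaluated at `x ∈ ℝ`. -/
def eval (c : FC) (x : ℝ) : ℂ := ∑' k : ℤ, c k * Complex.exp (Complex.I * (k : ℂ) * (x : ℂ))

/-- The `L^∞` norm (supremum of the represented periodic function over ℝ). -/
def linfty (c : FC) : ℝ := ⨆ x : ℝ, ‖eval c x‖

/-- The `W^{1,∞}` norm. -/
def w1infty (c : FC) : ℝ := linfty c + linfty (D1 c)

/-- A Fourier multiplier operator with real symbol `m`. -/
def mult (m : ℤ → ℝ) (c : FC) : FC := fun k => (m k : ℂ) * c k

/-- The operator `(1-∂ₓ²)⁻¹`, i.e. the Fourier multiplier `(1+k²)⁻¹`. -/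
def helmInv : FC → FC := mult fun k => (1 + (k : ℝ) ^ 2)⁻¹

/-- The operator `1-∂ₓ²`, i.e. the Fourier multiplier `1+k²`. -/
def helm : FC → FC := mult fun k => 1 + (k : ℝ) ^ 2

/-- The operator `T̃_ε = (1-ε²∂ₓ²)⁻¹`, i.e. the Fourier multiplier `(1+ε²k²)⁻¹`. -/
def T (ε : ℝ) : FC → FC := mult fun k => (1 + ε ^ 2 * (k : ℝ) ^ 2)⁻¹

/-- The periodic Hilbert transform, i.e. the Fourier multiplier `-i·sgn(k)`. -/
def hilbert (c : FC) : FC := fun k => -Complex.I * (Int.sign k : ℂ) * c k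

/-- The Friedrichs-type mollifier `J_ε`, the Fourier multiplier `ĵ(εk)`. -/
def Jmol (jhat : ℝ → ℝ) (ε : ℝ) : FC → FC := mult fun k => jhat (ε * (k : ℝ))

/-- The generalized Lie derivative `𝓛_ξ f = ξ ∂ₓ f + (∂ₓ ξ) f`. -/
def lie (ξ c : FC) : FC := mul ξ (D1 c) + mul (D1 ξ) c

/-- `𝓛²_ξ f = 𝓛_ξ (𝓛_ξ f)`. -/
def lie2 (ξ c : FC) : FC := lie ξ (lie ξ c)

/-- The coefficientwise sum `Σ_{k∈ℕ} F k` of a sequence of functions. -/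
def tsumFC (F : ℕ → FC) : FC := fun m => ∑' k : ℕ, F k m

/-- The norm on the product space `H^{s₁}×H^{s₂}`. -/
def pairNorm (s₁ s₂ : ℝ) (c d : FC) : ℝ := Real.sqrt (hsNorm s₁ c ^ 2 + hsNorm s₂ d ^ 2)

/-- The inner product on the product space `H^{s₁}×H^{s₂}`:
`((c₁,d₁),(c₂,d₂)) ↦ (c₁,c₂)_{H^{s₁}} + (d₁,d₂)_{H^{s₂}}`. -/
def pairInner (s₁ s₂ : ℝ) (c₁ d₁ c₂ d₂ : FC) : ℝ := hsInner s₁ c₁ c₂ + hsInner s₂ d₁ d₂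

end FC

/-!
With `M(k) = (1 + k²)^s (1 + ε²k²)⁻²`, the inner product is the sum of
`M(z) û(x) (iy û(y)) û(z)` over the frequencies `x + y + z = 0`. Symmetrizing
replaces its symbol by the cyclic sum `φ(x) + φ(y) + φ(z)` with `φ(x) = x M(x)`. A Lipschitz
partition of unity singles out a pair of comparable frequencies of opposite sign, say `y` and
`z`. On its support the cyclic sum is `x` times a bounded multiple of `M(y)`, because it
vanishes at `x = 0`; the factor `x` turns `u` into `∂ₓu`.

On a dyadic block of `y`, the remaining kernel has size `M(2^j)` and varies by `M(2^j) / 2^j`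
per unit step. Summation by parts in `y` thus reduces the block to kernels depending on `z`
alone, for which Hölder's inequality with `∂ₓu` in `L^∞` costs only `M(2^j)`. The blocks are
almost orthogonal. All constants are uniform in `ε` and in the truncation of `u` to finitely
many frequencies, and the truncation is removed by absolute convergence, as
`M(k) ≤ ε⁻² (1 + k²)^(s-1)`.
-/

namespace FC

section TripleSum

/-- The triples of frequencies in `I` with vanishing sum. -/
def zeroSumTriples (I : Finset ℤ) : Finset (ℤ × ℤ × ℤ) :=
  {p ∈ I ×ˢ I ×ˢ I | p.1 + p.2.1 + p.2.2 = 0}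

/-- The sum of `F` over the triples of frequencies in `I` with vanishing sum. For a product
`F x y z = a x * b y * c z` this is the mean over `𝕋` of the product of the trigonometric
polynomials with coefficients `a`, `b`, `c`. -/
def tripleSum (I : Finset ℤ) (F : ℤ → ℤ → ℤ → ℂ) : ℂ :=
  ∑ p ∈ zeroSumTriples I, F p.1 p.2.1 p.2.2

variable {I : Finset ℤ}

lemma mem_zeroSumTriples {p : ℤ × ℤ × ℤ} :
    p ∈ zeroSumTriples I ↔ p.1 ∈ I ∧ p.2.1 ∈ I ∧ p.2.2 ∈ I ∧ p.1 + p.2.1 + p.2.2 = 0 := by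
  simp only [zeroSumTriples, Finset.mem_filter, Finset.mem_product, and_assoc]

lemma tripleSum_congr {F G : ℤ → ℤ → ℤ → ℂ}
    (h : ∀ x ∈ I, ∀ y ∈ I, ∀ z ∈ I, x + y + z = 0 → F x y z = G x y z) :
    tripleSum I F = tripleSum I G := by
  refine Finset.sum_congr rfl fun p hp ↦ ?_
  obtain ⟨hx, hy, hz, h0⟩ := mem_zeroSumTriples.1 hp
  exact h _ hx _ hy _ hz h0

lemma tripleSum_add (F G : ℤ → ℤ → ℤ → ℂ) :
    tripleSum I (fun x y z ↦ F x y z + G x y z) = tripleSum I F + tripleSum I G :=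
  Finset.sum_add_distrib

lemma tripleSum_const_mul (a : ℂ) (F : ℤ → ℤ → ℤ → ℂ) :
    tripleSum I (fun x y z ↦ a * F x y z) = a * tripleSum I F :=
  (Finset.mul_sum ..).symm

lemma tripleSum_sum {ι : Type*} (S : Finset ι) (F : ι → ℤ → ℤ → ℤ → ℂ) :
    tripleSum I (fun x y z ↦ ∑ i ∈ S, F i x y z) = ∑ i ∈ S, tripleSum I (F i) :=
  Finset.sum_comm

lemma tripleSum_rotate (F : ℤ → ℤ → ℤ → ℂ) :
    tripleSum I (fun x y z ↦ F y z x) = tripleSum I F := by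
  refine Finset.sum_nbij' (fun p ↦ (p.2.1, p.2.2, p.1)) (fun p ↦ (p.2.2, p.1, p.2.1))
    ?_ ?_ (fun _ _ ↦ rfl) (fun _ _ ↦ rfl) (fun _ _ ↦ rfl)
  all_goals
    simp only [mem_zeroSumTriples]
    rintro p ⟨hx, hy, hz, h⟩
    exact ⟨by assumption, by assumption, by assumption, by omega⟩

lemma tripleSum_swap_left (F : ℤ → ℤ → ℤ → ℂ) :
    tripleSum I (fun x y z ↦ F y x z) = tripleSum I F := by
  refine Finset.sum_nbij' (fun p ↦ (p.2.1, p.1, p.2.2)) (fun p ↦ (p.2.1, p.1, p.2.2))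
    ?_ ?_ (fun _ _ ↦ rfl) (fun _ _ ↦ rfl) (fun _ _ ↦ rfl)
  all_goals
    simp only [mem_zeroSumTriples]
    rintro p ⟨hx, hy, hz, h⟩
    exact ⟨hy, hx, hz, by omega⟩

lemma tripleSum_swap_right (F : ℤ → ℤ → ℤ → ℂ) :
    tripleSum I (fun x y z ↦ F x z y) = tripleSum I F :=
  (tripleSum_swap_left fun x y z ↦ F y z x).trans (tripleSum_rotate F)

end TripleSum

section TrigPoly

open AddCircle MeasureTheory

instance : Fact (0 < 2 * Real.pi) := ⟨Real.two_pi_pos⟩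

/-- The trigonometric polynomial `∑_{k ∈ I} c k e^{ikx}` on `𝕋 = ℝ/2πℤ`. -/
def trigPoly (I : Finset ℤ) (c : FC) : C(AddCircle (2 * Real.pi), ℂ) :=
  ∑ k ∈ I, c k • fourier k

/-- The `ℓ²` norm of the coefficients with frequencies in `I`. -/
def l2Norm (I : Finset ℤ) (c : FC) : ℝ := √(∑ k ∈ I, ‖c k‖ ^ 2)

lemma l2Norm_nonneg (I : Finset ℤ) (c : FC) : 0 ≤ l2Norm I c := Real.sqrt_nonneg _

lemma integral_fourier (n : ℤ) :
    ∫ t : AddCircle (2 * Real.pi), fourier n t ∂haarAddCircle = if n = 0 then 1 else 0 := by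
  have h := congrFun (fourierCoeff_fourier (T := 2 * Real.pi) n) 0
  simpa [fourierCoeff, Pi.single_apply, eq_comm] using h

lemma tripleSum_eq_integral (I : Finset ℤ) (w f g : FC) :
    tripleSum I (fun x y z ↦ w x * f y * g z)
      = ∫ t, trigPoly I w t * trigPoly I f t * trigPoly I g t ∂haarAddCircle := by
  have expand (t : AddCircle (2 * Real.pi)) :
      trigPoly I w t * trigPoly I f t * trigPoly I g t
        = ∑ p ∈ I ×ˢ I ×ˢ I, w p.1 * f p.2.1 * g p.2.2 * fourier (p.1 + p.2.1 + p.2.2) t := by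
    simp only [trigPoly, ContinuousMap.coe_sum, Finset.sum_apply, ContinuousMap.coe_smul,
      Pi.smul_apply, smul_eq_mul, Finset.sum_product]
    rw [mul_assoc, Finset.sum_mul_sum, Finset.sum_mul_sum]
    simp only [Finset.mul_sum]
    refine Finset.sum_congr rfl fun x _ ↦ Finset.sum_congr rfl fun y _ ↦
      Finset.sum_congr rfl fun z _ ↦ ?_
    rw [fourier_add, fourier_add]
    ring
  simp_rw [expand]
  rw [integral_finsetSum _ fun p _ ↦
    (Continuous.integrable_of_hasCompactSupport (by fun_prop) (.of_compactSpace _))]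
  simp only [integral_const_mul, integral_fourier, mul_ite, mul_one, mul_zero, tripleSum,
    zeroSumTriples, Finset.sum_filter]

lemma integral_norm_trigPoly_sq (I : Finset ℤ) (f : FC) :
    ∫ t, ‖trigPoly I f t‖ ^ 2 ∂haarAddCircle = l2Norm I f ^ 2 := by
  have toLp_trigPoly : ContinuousMap.toLp 2 haarAddCircle ℂ (trigPoly I f)
      = ∑ k ∈ I, f k • fourierLp 2 k := by
    simp only [trigPoly, map_sum, map_smul]
  have h := ContinuousMap.inner_toLp haarAddCircle (trigPoly I f) (trigPoly I f)
  rw [toLp_trigPoly, orthonormal_fourier.inner_sum] at h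
  simp only [Complex.mul_conj', Complex.conj_mul'] at h
  rw [l2Norm, Real.sq_sqrt (by positivity)]
  exact_mod_cast h.symm

theorem norm_tripleSum_mul_le (I : Finset ℤ) (w f g : FC) :
    ‖tripleSum I (fun x y z ↦ w x * f y * g z)‖
      ≤ ‖trigPoly I w‖ * (l2Norm I f * l2Norm I g) := by
  have memLp (c : FC) : MemLp (trigPoly I c) (ENNReal.ofReal 2) haarAddCircle := by
    rw [ENNReal.ofReal_ofNat]
    exact (trigPoly I c).memLp _ ℂ
  have holder := integral_mul_norm_le_Lp_mul_Lq Real.HolderConjugate.two_two (memLp f) (memLp g)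
  simp only [Real.rpow_two, integral_norm_trigPoly_sq, ← Real.sqrt_eq_rpow,
    Real.sqrt_sq (l2Norm_nonneg _ _)] at holder
  rw [tripleSum_eq_integral]
  calc ‖∫ t, trigPoly I w t * trigPoly I f t * trigPoly I g t ∂haarAddCircle‖
      ≤ ∫ t, ‖trigPoly I w‖ * (‖trigPoly I f t‖ * ‖trigPoly I g t‖) ∂haarAddCircle := by
        refine norm_integral_le_of_norm_le
          (Continuous.integrable_of_hasCompactSupport (by fun_prop) (.of_compactSpace _))
          (.of_forall fun t ↦ ?_)
        rw [norm_mul, norm_mul, mul_assoc]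
        gcongr
        exact (trigPoly I w).norm_coe_le_norm t
    _ ≤ ‖trigPoly I w‖ * (l2Norm I f * l2Norm I g) := by
        rw [integral_const_mul]
        gcongr

end TrigPoly

section Kernel

variable {I : Finset ℤ}

lemma l2Norm_le_mul {q : ℝ} (hq : 0 ≤ q) {f g : FC} (h : ∀ k, ‖f k‖ ≤ q * ‖g k‖) :
    l2Norm I f ≤ q * l2Norm I g := by
  refine Real.sqrt_le_iff.2 ⟨mul_nonneg hq (l2Norm_nonneg I g), ?_⟩
  rw [mul_pow, l2Norm, Real.sq_sqrt (by positivity), Finset.mul_sum]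
  gcongr with k
  rw [← mul_pow]
  gcongr
  exact h k

lemma l2Norm_indicator_le (S : Set ℤ) (f : FC) : l2Norm I (S.indicator f) ≤ l2Norm I f := by
  simpa only [one_mul] using l2Norm_le_mul zero_le_one fun k ↦
    (norm_indicator_le_norm_self f k).trans_eq (one_mul _).symm

lemma l2Norm_mul_le {q : ℝ} (hq : 0 ≤ q) {h g : FC} (hh : ∀ z, g z ≠ 0 → ‖h z‖ ≤ q) :
    l2Norm I (h * g) ≤ q * l2Norm I g := by
  refine l2Norm_le_mul hq fun z ↦ ?_
  rw [Pi.mul_apply, norm_mul]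
  rcases eq_or_ne (g z) 0 with hz | hz
  · simp only [hz, norm_zero, mul_zero, le_refl]
  · gcongr
    exact hh z hz

lemma sum_Ico_int_sub_of_le {G : Type*} [AddCommGroup G] (F : ℤ → G) {a b : ℤ} (hab : a ≤ b) :
    ∑ m ∈ Finset.Ico a b, (F (m + 1) - F m) = F b - F a := by
  induction b, hab using Int.leInduction with
  | base => simp
  | succ b hab ih =>
    rw [← Finset.insert_Ico_right_eq_Ico_add_one hab, Finset.sum_insert Finset.right_notMem_Ico, ih]
    abel

lemma mul_eq_add_sum_differences {a b : ℤ} (k : ℤ → ℂ) {f : FC}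
    (hf : ∀ y, f y ≠ 0 → y ∈ Set.Icc a b) (y : ℤ) :
    k y * f y = k a * f y
      + ∑ m ∈ Finset.Ico a b, (k (m + 1) - k m) * (Set.Ioi m).indicator f y := by
  by_cases hy : f y = 0
  · simp [Set.indicator_apply, hy]
  obtain ⟨hay, hyb⟩ := hf y hy
  have filter_lt : (Finset.Ico a b).filter (· < y) = Finset.Ico a y := by
    ext m
    simp only [Finset.mem_filter, Finset.mem_Ico]
    omega
  simp only [Set.indicator_apply, Set.mem_Ioi, mul_ite, mul_zero]
  rw [← Finset.sum_filter, filter_lt, ← Finset.sum_mul, sum_Ico_int_sub_of_le k hay]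
  ring

lemma tripleSum_kernel_eq {a b : ℤ} (K : ℤ → ℤ → ℂ) (w g : FC) {f : FC}
    (hf : ∀ y, f y ≠ 0 → y ∈ Set.Icc a b) :
    tripleSum I (fun x y z ↦ w x * K y z * f y * g z)
      = tripleSum I (fun x y z ↦ w x * f y * (K a * g) z)
        + ∑ m ∈ Finset.Ico a b, tripleSum I
            (fun x y z ↦ w x * (Set.Ioi m).indicator f y * ((K (m + 1) - K m) * g) z) := by
  rw [← tripleSum_sum, ← tripleSum_add]
  refine tripleSum_congr fun x _ y _ z _ _ ↦ ?_
  rw [mul_assoc (w x), mul_eq_add_sum_differences (K · z) hf, mul_add, add_mul, Finset.mul_sum,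
    Finset.sum_mul]
  simp only [Pi.mul_apply, Pi.sub_apply]
  congr 1
  · ring
  · exact Finset.sum_congr rfl fun m _ ↦ by ring

theorem norm_tripleSum_kernel_le {a b : ℤ} {K : ℤ → ℤ → ℂ} {w f g : FC} {Q₀ : ℝ} {Q : ℤ → ℝ}
    (hf : ∀ y, f y ≠ 0 → y ∈ Set.Icc a b) (hQ₀ : 0 ≤ Q₀) (hQ : ∀ m, 0 ≤ Q m)
    (hK : ∀ z, g z ≠ 0 → ‖K a z‖ ≤ Q₀)
    (hΔK : ∀ m ∈ Finset.Ico a b, ∀ z, g z ≠ 0 → ‖K (m + 1) z - K m z‖ ≤ Q m) :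
    ‖tripleSum I (fun x y z ↦ w x * K y z * f y * g z)‖
      ≤ (Q₀ + ∑ m ∈ Finset.Ico a b, Q m) * (‖trigPoly I w‖ * (l2Norm I f * l2Norm I g)) := by
  have norm_le {f' h : FC} {q : ℝ} (hq : 0 ≤ q) (hf' : l2Norm I f' ≤ l2Norm I f)
      (hh : ∀ z, g z ≠ 0 → ‖h z‖ ≤ q) :
      ‖tripleSum I (fun x y z ↦ w x * f' y * (h * g) z)‖
        ≤ q * (‖trigPoly I w‖ * (l2Norm I f * l2Norm I g)) :=
    calc _ ≤ ‖trigPoly I w‖ * (l2Norm I f' * l2Norm I (h * g)) := norm_tripleSum_mul_le ..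
      _ ≤ ‖trigPoly I w‖ * (l2Norm I f * (q * l2Norm I g)) := by
        gcongr ‖trigPoly I w‖ * ?_
        exact mul_le_mul hf' (l2Norm_mul_le hq hh) (l2Norm_nonneg _ _) (l2Norm_nonneg _ _)
      _ = q * (‖trigPoly I w‖ * (l2Norm I f * l2Norm I g)) := by ring
  rw [tripleSum_kernel_eq K w g hf, add_mul, Finset.sum_mul]
  refine (norm_add_le _ _).trans (add_le_add (norm_le hQ₀ le_rfl hK) ?_)
  exact (norm_sum_le _ _).trans <| Finset.sum_le_sum fun m hm ↦
    norm_le (hQ m) (l2Norm_indicator_le _ _) (hΔK m hm)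

end Kernel

section Cutoff

variable {b b' c x y z : ℝ}

/-- A Lipschitz cutoff to the pairs of frequencies of equal sign and comparable size: it is `1` if
`3/4 ≤ b/c ≤ 4/3` and vanishes unless `1/4 < b/c < 4`. As `x/0 = 0`, it vanishes if `b` or `c`
does. -/
def cutoff (b c : ℝ) : ℝ := max 0 (min 1 (2 * min (b / c) (c / b) - 1 / 2))

lemma abs_cutoff_le_one (b c : ℝ) : |cutoff b c| ≤ 1 :=
  (abs_of_nonneg (le_max_left _ _)).trans_le (max_le zero_le_one (min_le_left _ _))

lemma cutoff_comm (b c : ℝ) : cutoff b c = cutoff c b := by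
  simp only [cutoff, min_comm (b / c)]

lemma cutoff_neg_neg (b c : ℝ) : cutoff (-b) (-c) = cutoff b c := by
  simp only [cutoff, neg_div_neg_eq]

lemma cutoff_neg_right_comm (y z : ℝ) : cutoff z (-y) = cutoff y (-z) := by
  rw [← cutoff_neg_neg, neg_neg, cutoff_comm]

lemma cutoff_eq_zero_of_mul_nonpos (h : b * c ≤ 0) : cutoff b c = 0 := by
  have ratio_nonpos : b / c ≤ 0 := by
    rw [div_nonpos_iff]
    exact mul_nonpos_iff.1 h
  refine max_eq_left ((min_le_right _ _).trans ?_)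
  linarith [min_le_left (b / c) (c / b)]

lemma cutoff_of_div_mem_Icc (h : b / c ∈ Set.Icc 0 1) :
    cutoff b c = max 0 (min 1 (2 * (b / c) - 1 / 2)) := by
  have le_inv : b / c ≤ c / b := by
    rcases h.1.eq_or_lt with h0 | h0
    · rw [← inv_div b c, ← h0, inv_zero]
    · rw [← inv_div b c]
      exact h.2.trans ((one_le_inv₀ h0).2 h.2)
  rw [cutoff, min_eq_left le_inv]

lemma comparable_of_cutoff_ne_zero (hb : 0 < b) (h : cutoff b c ≠ 0) : b < 4 * c ∧ c < 4 * b := by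
  have hc : 0 < c := by
    by_contra! hc
    exact h (cutoff_eq_zero_of_mul_nonpos (mul_nonpos_of_nonneg_of_nonpos hb.le hc))
  have quarter_lt : 1 / 4 < min (b / c) (c / b) := by
    by_contra! hle
    exact h (max_eq_left ((min_le_right _ _).trans (by linarith)))
  obtain ⟨h₁, h₂⟩ := lt_min_iff.1 quarter_lt
  rw [lt_div_iff₀ hc] at h₁
  rw [lt_div_iff₀ hb] at h₂
  constructor <;> linarith

lemma cutoff_add_cutoff_add (hxy : 0 ≤ x * y) (h0 : x + y ≠ 0) (h : x + y + z = 0) :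
    cutoff y (-z) + cutoff z (-x) + cutoff x (-y) = 1 := by
  have hz : -z = x + y := by linarith
  have hsum : x / (x + y) + y / (x + y) = 1 := by rw [← add_div, div_self h0]
  have hx : 0 ≤ x / (x + y) := by
    rw [← mul_div_mul_right x (x + y) h0]
    exact div_nonneg (by nlinarith [sq_nonneg x]) (mul_self_nonneg _)
  have hy : 0 ≤ y / (x + y) := by
    rw [← mul_div_mul_right y (x + y) h0]
    exact div_nonneg (by nlinarith [sq_nonneg y]) (mul_self_nonneg _)
  rw [cutoff_eq_zero_of_mul_nonpos (by linarith : x * -y ≤ 0), cutoff_neg_right_comm x z, hz,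
    cutoff_of_div_mem_Icc ⟨hy, by linarith⟩, cutoff_of_div_mem_Icc ⟨hx, by linarith⟩]
  grind

lemma cutoff_partition (h : x + y + z = 0) (h0 : x ≠ 0 ∨ y ≠ 0) :
    cutoff y (-z) + cutoff z (-x) + cutoff x (-y) = 1 := by
  have same_sign : 0 ≤ x * y ∧ x + y ≠ 0 ∨ 0 ≤ y * z ∧ y + z ≠ 0 ∨ 0 ≤ z * x ∧ z + x ≠ 0 := by
    obtain rfl : z = -(x + y) := by linarith
    grind [mul_nonneg_iff, mul_self_nonneg, add_eq_zero_iff_eq_neg, mul_nonneg, le_total]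
  rcases same_sign with ⟨hn, hne⟩ | ⟨hn, hne⟩ | ⟨hn, hne⟩
  · exact cutoff_add_cutoff_add hn hne h
  · linarith [cutoff_add_cutoff_add hn hne (z := x) (by linarith)]
  · linarith [cutoff_add_cutoff_add hn hne (z := y) (by linarith)]

lemma abs_min_div_sub_min_div_le (hb : 0 < b) (hbb' : b ≤ b') (hc : 0 < c) :
    |min (b' / c) (c / b') - min (b / c) (c / b)| ≤ (b' - b) / b := by
  have hb' : 0 < b' := hb.trans_le hbb'
  set t := b' / b with ht
  set m := min (b / c) (c / b) with hm
  have one_le_t : 1 ≤ t := (one_le_div hb).2 hbb'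
  have m_nonneg : 0 ≤ m := le_min (by positivity) (by positivity)
  have m_le_one : m ≤ 1 := by
    rcases le_total b c with h | h
    · exact (min_le_left _ _).trans ((div_le_one hc).2 h)
    · exact (min_le_right _ _).trans ((div_le_one hb).2 h)
  have scale_left : b' / c = t * (b / c) := by rw [ht]; field_simp
  have scale_right : c / b' = t⁻¹ * (c / b) := by rw [ht]; field_simp
  have inv_le : t⁻¹ ≤ t := (inv_le_one_of_one_le₀ one_le_t).trans one_le_t
  have upper : min (b' / c) (c / b') ≤ t * m := by
    rw [hm, mul_min_of_nonneg _ _ (by positivity), scale_left, scale_right]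
    gcongr
  have lower : t⁻¹ * m ≤ min (b' / c) (c / b') := by
    rw [hm, mul_min_of_nonneg _ _ (by positivity), scale_left, scale_right]
    gcongr
  have two_le : 2 ≤ t + t⁻¹ := by
    have : t * t⁻¹ = 1 := mul_inv_cancel₀ (by positivity)
    nlinarith [sq_nonneg (t - 1), inv_pos.2 (zero_lt_one.trans_le one_le_t)]
  rw [sub_div, div_self hb.ne', ← ht, abs_le]
  constructor <;> nlinarith

lemma abs_cutoff_sub_cutoff_le (hb : 0 < b) (hbb' : b ≤ b') (c : ℝ) :
    |cutoff b' c - cutoff b c| ≤ 2 * ((b' - b) / b) := by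
  rcases le_or_gt c 0 with hc | hc
  · rw [cutoff_eq_zero_of_mul_nonpos (mul_nonpos_of_nonneg_of_nonpos (hb.le.trans hbb') hc),
      cutoff_eq_zero_of_mul_nonpos (mul_nonpos_of_nonneg_of_nonpos hb.le hc), sub_zero, abs_zero]
    have := sub_nonneg.2 hbb'
    positivity
  have clamp_lipschitz (p q : ℝ) : |max 0 (min 1 p) - max 0 (min 1 q)| ≤ |p - q| := by
    grind
  refine (clamp_lipschitz _ _).trans ?_
  rw [sub_sub_sub_cancel_right, ← mul_sub, abs_mul, abs_two]
  gcongr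
  exact abs_min_div_sub_min_div_le hb hbb' hc

end Cutoff

section CommutatorWeight

/-- The symbol `x M(x)` of `∂ₓ ∘ M(D)`, up to the factor `i`. -/
def derivSymbol (M : ℝ → ℝ) (x : ℝ) : ℝ := x * M x

/-- The even weights `M` of polynomial growth in `|x|` such that `M` and `(xM)'` have derivatives of
size `M(R)/R` on `[-R, R]`: the weights for which the commutator of `M(D)∂ₓ` with a function costs
no derivative of the other factor. All the conditions share the constant `K`. -/
structure IsCommutatorWeight (K : ℝ) (M : ℝ → ℝ) : Prop where
  one_le : 1 ≤ K
  even : ∀ x, M (-x) = M x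
  nonneg : ∀ x, 0 ≤ M x
  mono : ∀ {x R}, |x| ≤ R → M x ≤ M R
  doubling : ∀ x, M (2 * x) ≤ K * M x
  differentiable : Differentiable ℝ M
  differentiable_deriv : Differentiable ℝ (deriv (derivSymbol M))
  abs_deriv_le : ∀ {x R}, 0 < R → |x| ≤ R → |deriv M x| ≤ K * (M R / R)
  abs_deriv_deriv_le : ∀ {x R}, 0 < R → |x| ≤ R →
    |deriv (deriv (derivSymbol M)) x| ≤ K * (M R / R)

/-- The quotient of the trilinear symbol `φ(c - b) + φ(b) - φ(c)`, `φ(x) = x M(x)`, by `c - b`, with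
the difference quotient of `φ` written as a mean of `φ'` so that it is regular at `b = c`. -/
def commutatorSymbol (M : ℝ → ℝ) (b c : ℝ) : ℝ :=
  M (c - b) - ∫ t in (0 : ℝ)..1, deriv (derivSymbol M) (b + t * (c - b))

lemma abs_sub_le_of_abs_deriv_le {f : ℝ → ℝ} {R A x y : ℝ} (hf : Differentiable ℝ f)
    (bound : ∀ z, |z| ≤ R → |deriv f z| ≤ A) (hx : |x| ≤ R) (hy : |y| ≤ R) :
    |f y - f x| ≤ A * |y - x| :=
  (convex_Icc (-R) R).norm_image_sub_le_of_norm_deriv_le (fun z _ ↦ hf z)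
    (fun z hz ↦ bound z (abs_le.2 hz)) (abs_le.1 hx) (abs_le.1 hy)

lemma abs_add_mul_sub_le {b c t R : ℝ} (hb : b ∈ Set.Icc 0 R) (hc : c ∈ Set.Icc 0 R)
    (ht : t ∈ Set.Icc 0 1) : |b + t * (c - b)| ≤ R := by
  have hmem := (convex_Icc 0 R).add_smul_sub_mem hb hc ht
  exact (abs_of_nonneg hmem.1).trans_le hmem.2

lemma abs_sub_le_of_mem_Icc {b c R : ℝ} (hb : b ∈ Set.Icc 0 R) (hc : c ∈ Set.Icc 0 R) :
    |c - b| ≤ R :=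
  abs_le.2 ⟨by linarith [hb.2, hc.1], by linarith [hb.1, hc.2]⟩

namespace IsCommutatorWeight

variable {K : ℝ} {M : ℝ → ℝ} (hM : IsCommutatorWeight K M) {b b' c R : ℝ}
include hM

lemma derivSymbol_neg (x : ℝ) : derivSymbol M (-x) = -derivSymbol M x := by
  rw [derivSymbol, hM.even, derivSymbol, neg_mul]

lemma differentiable_derivSymbol : Differentiable ℝ (derivSymbol M) :=
  differentiable_id.fun_mul hM.differentiable

lemma abs_deriv_derivSymbol_le {x : ℝ} (hR : 0 < R) (hx : |x| ≤ R) :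
    |deriv (derivSymbol M) x| ≤ 2 * K * M R := by
  have product_rule : deriv (derivSymbol M) x = M x + x * deriv M x := by
    change deriv (fun y ↦ y * M y) x = _
    simpa using ((hasDerivAt_id x).fun_mul (hM.differentiable x).hasDerivAt).deriv
  calc |deriv (derivSymbol M) x| ≤ |M x| + |x| * |deriv M x| := by
        rw [product_rule, ← abs_mul]
        exact abs_add_le _ _
    _ ≤ M R + R * (K * (M R / R)) := by
        rw [abs_of_nonneg (hM.nonneg x)]
        gcongr
        · exact hM.mono hx
        · exact hM.abs_deriv_le hR hx
    _ = (1 + K) * M R := by field_simp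
    _ ≤ 2 * K * M R := by
        have := hM.nonneg R
        gcongr
        linarith [hM.one_le]

lemma sub_mul_commutatorSymbol (b c : ℝ) :
    (c - b) * commutatorSymbol M b c
      = derivSymbol M (c - b) + derivSymbol M b - derivSymbol M c := by
  have along_segment (t : ℝ) : HasDerivAt (fun t ↦ derivSymbol M (b + t * (c - b)))
      (deriv (derivSymbol M) (b + t * (c - b)) * (c - b)) t := by
    refine HasDerivAt.comp t (hM.differentiable_derivSymbol _).hasDerivAt ?_
    simpa using ((hasDerivAt_id t).mul_const (c - b)).const_add b
  have continuous_deriv := hM.differentiable_deriv.continuous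
  have ftc := intervalIntegral.integral_eq_sub_of_hasDerivAt (a := 0) (b := 1)
    (fun t _ ↦ along_segment t) (Continuous.intervalIntegrable (by fun_prop) _ _)
  rw [intervalIntegral.integral_mul_const] at ftc
  simp only [one_mul, zero_mul, add_zero, add_sub_cancel] at ftc
  rw [commutatorSymbol, mul_sub, mul_comm (c - b) (∫ _ in _.._, _), ftc,
    show derivSymbol M (c - b) = (c - b) * M (c - b) from rfl]
  ring

lemma abs_commutatorSymbol_le (hR : 0 < R) (hb : b ∈ Set.Icc 0 R) (hc : c ∈ Set.Icc 0 R) :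
    |commutatorSymbol M b c| ≤ 3 * K * M R := by
  have integrand_le : ∀ t ∈ Set.uIoc (0 : ℝ) 1,
      ‖deriv (derivSymbol M) (b + t * (c - b))‖ ≤ 2 * K * M R := by
    rw [Set.uIoc_of_le zero_le_one]
    exact fun t ht ↦ hM.abs_deriv_derivSymbol_le hR <|
      abs_add_mul_sub_le hb hc (Set.Ioc_subset_Icc_self ht)
  have integral_le := intervalIntegral.norm_integral_le_of_norm_le_const integrand_le
  rw [sub_zero, abs_one, mul_one, Real.norm_eq_abs] at integral_le
  calc |commutatorSymbol M b c| ≤ |M (c - b)| + 2 * K * M R :=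
        (abs_sub _ _).trans (by gcongr)
    _ ≤ K * M R + 2 * K * M R := by
        rw [abs_of_nonneg (hM.nonneg _)]
        gcongr
        exact (hM.mono (abs_sub_le_of_mem_Icc hb hc)).trans
          (le_mul_of_one_le_left (hM.nonneg R) hM.one_le)
    _ = 3 * K * M R := by ring

lemma abs_commutatorSymbol_sub_le (hR : 0 < R) (hb : b ∈ Set.Icc 0 R) (hb' : b' ∈ Set.Icc 0 R)
    (hc : c ∈ Set.Icc 0 R) :
    |commutatorSymbol M b' c - commutatorSymbol M b c| ≤ 2 * K * (M R / R) * |b' - b| := by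
  have continuous_deriv := hM.differentiable_deriv.continuous
  have nonneg : 0 ≤ K * (M R / R) :=
    (abs_nonneg _).trans (hM.abs_deriv_le hR (abs_zero.trans_le hR.le))
  have integrand_le : ∀ t ∈ Set.uIoc (0 : ℝ) 1,
      ‖deriv (derivSymbol M) (b' + t * (c - b')) - deriv (derivSymbol M) (b + t * (c - b))‖
        ≤ K * (M R / R) * |b' - b| := by
    rw [Set.uIoc_of_le zero_le_one]
    intro t ht
    have ht' := Set.Ioc_subset_Icc_self ht
    refine (abs_sub_le_of_abs_deriv_le hM.differentiable_deriv
      (fun z hz ↦ hM.abs_deriv_deriv_le hR hz) (abs_add_mul_sub_le hb hc ht')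
      (abs_add_mul_sub_le hb' hc ht')).trans ?_
    rw [show b' + t * (c - b') - (b + t * (c - b)) = (1 - t) * (b' - b) by ring, abs_mul,
      abs_of_nonneg (sub_nonneg.2 ht.2)]
    gcongr
    exact mul_le_of_le_one_left (abs_nonneg _) (by linarith [ht.1])
  have integral_le := intervalIntegral.norm_integral_le_of_norm_le_const integrand_le
  rw [sub_zero, abs_one, mul_one, Real.norm_eq_abs,
    intervalIntegral.integral_sub (Continuous.intervalIntegrable (by fun_prop) _ _)
      (Continuous.intervalIntegrable (by fun_prop) _ _)] at integral_le
  have weight_le := abs_sub_le_of_abs_deriv_le hM.differentiable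
    (fun z hz ↦ hM.abs_deriv_le hR hz) (abs_sub_le_of_mem_Icc hb hc) (abs_sub_le_of_mem_Icc hb' hc)
  rw [sub_sub_sub_cancel_left, abs_sub_comm b b'] at weight_le
  rw [commutatorSymbol, commutatorSymbol, sub_sub_sub_comm]
  refine (abs_sub _ _).trans ?_
  linarith

end IsCommutatorWeight

end CommutatorWeight

section CommutatorKernel

/-- The symbol `commutatorSymbol M` restricted to comparable pairs of frequencies by `cutoff`. -/
def commutatorKernel (M : ℝ → ℝ) (b c : ℝ) : ℝ := cutoff b c * commutatorSymbol M b c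

namespace IsCommutatorWeight

variable {K : ℝ} {M : ℝ → ℝ} (hM : IsCommutatorWeight K M) {b b' n : ℝ}
include hM

lemma two_pow_mul_le (k : ℕ) (x : ℝ) : M (2 ^ k * x) ≤ K ^ k * M x := by
  induction k with
  | zero => simp only [pow_zero, one_mul, le_refl]
  | succ k ih =>
    have := hM.one_le
    calc M (2 ^ (k + 1) * x) = M (2 * (2 ^ k * x)) := by ring_nf
      _ ≤ K * M (2 ^ k * x) := hM.doubling _
      _ ≤ K * (K ^ k * M x) := by gcongr
      _ = K ^ (k + 1) * M x := by ring

lemma le_pow_mul_of_le (k : ℕ) {x R : ℝ} (hR : 0 ≤ R) (hx : R ≤ 2 ^ k * |x|) :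
    M R ≤ K ^ k * M x := by
  have even_abs : M |x| = M x := by
    rcases abs_choice x with h | h
    · rw [h]
    · rw [h, hM.even]
  rw [← even_abs]
  exact (hM.mono (by rwa [abs_of_nonneg hR])).trans (hM.two_pow_mul_le k |x|)

lemma abs_commutatorKernel_le (hn : 0 < n) (hb : b ∈ Set.Icc n (2 * n)) (c : ℝ) :
    |commutatorKernel M b c| ≤ 3 * K * M (8 * n) := by
  have := hM.one_le
  have := hM.nonneg (8 * n)
  by_cases hcut : cutoff b c = 0
  · rw [commutatorKernel, hcut, zero_mul, abs_zero]
    positivity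
  obtain ⟨hbc, hcb⟩ := comparable_of_cutoff_ne_zero (hn.trans_le hb.1) hcut
  rw [commutatorKernel, abs_mul, ← one_mul (3 * K * M (8 * n))]
  gcongr
  · exact abs_cutoff_le_one b c
  · exact hM.abs_commutatorSymbol_le (by linarith) ⟨by linarith [hb.1], by linarith [hb.2]⟩
      ⟨by linarith [hb.1], by linarith [hb.2]⟩

lemma abs_commutatorKernel_sub_le (hn : 0 < n) (hb : n ≤ b) (hbb' : b ≤ b') (hb' : b' ≤ 2 * n)
    (c : ℝ) :
    |commutatorKernel M b' c - commutatorKernel M b c| ≤ 7 * K * (M (8 * n) / n) * (b' - b) := by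
  have := hM.one_le
  have := hM.nonneg (8 * n)
  have hsub := sub_nonneg.2 hbb'
  by_cases hcut : cutoff b c = 0 ∧ cutoff b' c = 0
  · rw [commutatorKernel, commutatorKernel, hcut.1, hcut.2, zero_mul, zero_mul, sub_zero, abs_zero]
    positivity
  have hc : c ∈ Set.Icc 0 (8 * n) := by
    rcases not_and_or.1 hcut with h | h
    · obtain ⟨hbc, hcb⟩ := comparable_of_cutoff_ne_zero (by linarith) h
      constructor <;> linarith
    · obtain ⟨hbc, hcb⟩ := comparable_of_cutoff_ne_zero (by linarith) h
      constructor <;> linarith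
  have cutoff_diff : |cutoff b' c - cutoff b c| ≤ 2 * ((b' - b) / n) :=
    (abs_cutoff_sub_cutoff_le (by linarith) hbb' c).trans (by gcongr)
  have symbol_le : |commutatorSymbol M b' c| ≤ 3 * K * M (8 * n) :=
    hM.abs_commutatorSymbol_le (by linarith) ⟨by linarith, by linarith⟩ hc
  have symbol_diff := hM.abs_commutatorSymbol_sub_le (R := 8 * n) (b := b) (b' := b')
    (by linarith) ⟨by linarith, by linarith⟩ ⟨by linarith, by linarith⟩ hc
  rw [abs_of_nonneg hsub] at symbol_diff
  calc |commutatorKernel M b' c - commutatorKernel M b c|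
      = |(cutoff b' c - cutoff b c) * commutatorSymbol M b' c
          + cutoff b c * (commutatorSymbol M b' c - commutatorSymbol M b c)| := by
        rw [commutatorKernel, commutatorKernel]
        ring_nf
    _ ≤ 2 * ((b' - b) / n) * (3 * K * M (8 * n))
          + 1 * (2 * K * (M (8 * n) / (8 * n)) * (b' - b)) := by
        refine (abs_add_le _ _).trans ?_
        rw [abs_mul, abs_mul]
        gcongr
        exact abs_cutoff_le_one b c
    _ = 25 / 4 * (K * (M (8 * n) / n) * (b' - b)) := by
        field_simp
        ring
    _ ≤ 7 * (K * (M (8 * n) / n) * (b' - b)) := by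
        gcongr
        norm_num
    _ = 7 * K * (M (8 * n) / n) * (b' - b) := by ring

end IsCommutatorWeight

end CommutatorKernel

section Dyadic

variable {I : Finset ℤ}

/-- The squared weighted `ℓ²` norm of the coefficients with frequencies in `I`. -/
def energy (M : ℝ → ℝ) (I : Finset ℤ) (u : FC) : ℝ := ∑ k ∈ I, M k * ‖u k‖ ^ 2

/-- The frequencies `y` with `2^j ≤ y < 2^(j+1)`. -/
def dyadicBlock (j : ℕ) : Set ℤ := Set.Ico (2 ^ j) (2 ^ (j + 1))

/-- The negative frequencies `z` for which `-z` is within a factor `4` of some member of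
`dyadicBlock j`. -/
def partnerBlock (j : ℕ) : Set ℤ := {z | 2 ^ j < 4 * -z ∧ -z < 8 * 2 ^ j}

lemma l2Norm_sq (I : Finset ℤ) (f : FC) : l2Norm I f ^ 2 = ∑ k ∈ I, ‖f k‖ ^ 2 :=
  Real.sq_sqrt (by positivity)

lemma mul_l2Norm_indicator_sq_le {M : ℝ → ℝ} {A B : ℝ} {S : Set ℤ} (u : FC)
    (h : ∀ k ∈ S, A ≤ B * M k) :
    A * l2Norm I (S.indicator u) ^ 2 ≤ B * energy M I (S.indicator u) := by
  rw [l2Norm_sq, energy, Finset.mul_sum, Finset.mul_sum]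
  refine Finset.sum_le_sum fun k _ ↦ ?_
  by_cases hk : k ∈ S
  · rw [← mul_assoc]
    gcongr
    exact h k hk
  · simp [hk]

open scoped Classical in
lemma sum_energy_indicator_le {M : ℝ → ℝ} (hM : ∀ x, 0 ≤ M x) {ι : Type*} {J : Finset ι}
    {B : ι → Set ℤ} {n : ℕ} (hB : ∀ k, {j ∈ J | k ∈ B j}.card ≤ n) (u : FC) :
    ∑ j ∈ J, energy M I ((B j).indicator u) ≤ n * energy M I u := by
  simp only [energy]
  rw [Finset.sum_comm, Finset.mul_sum]
  refine Finset.sum_le_sum fun k _ ↦ ?_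
  calc ∑ j ∈ J, M k * ‖(B j).indicator u k‖ ^ 2
      = ∑ j ∈ J with k ∈ B j, M k * ‖u k‖ ^ 2 := by
        rw [Finset.sum_filter]
        refine Finset.sum_congr rfl fun j _ ↦ ?_
        split_ifs with h <;> simp [h]
    _ ≤ n * (M k * ‖u k‖ ^ 2) := by
        rw [Finset.sum_const, nsmul_eq_mul]
        have := hM k
        gcongr
        exact hB k

lemma eq_log_of_mem_dyadicBlock {j : ℕ} {y : ℤ} (h : y ∈ dyadicBlock j) :
    j = Nat.log 2 y.toNat := by
  obtain ⟨h₁, h₂⟩ := h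
  lift y to ℕ using (by positivity : (0 : ℤ) ≤ 2 ^ j).trans h₁
  exact (Nat.log_eq_of_pow_le_of_lt_pow (by exact_mod_cast h₁) (by exact_mod_cast h₂)).symm

lemma mem_dyadicBlock_log {y : ℤ} (hy : 0 < y) : y ∈ dyadicBlock (Nat.log 2 y.toNat) := by
  lift y to ℕ using hy.le
  have hy0 : y ≠ 0 := by omega
  exact ⟨by exact_mod_cast Nat.pow_log_le_self 2 hy0,
    by exact_mod_cast Nat.lt_pow_succ_log_self one_lt_two y⟩

lemma mem_Icc_log_of_mem_partnerBlock {j : ℕ} {z : ℤ} (h : z ∈ partnerBlock j) :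
    j ∈ Finset.Icc (Nat.log 2 (-z).toNat - 2) (Nat.log 2 (-z).toNat + 2) := by
  obtain ⟨h₁, h₂⟩ := h
  generalize hm : -z = m at h₁ h₂ ⊢
  have hm : 0 < m := by linarith [pow_pos (zero_lt_two' ℤ) j]
  lift m to ℕ using hm.le
  rw [Int.toNat_natCast]
  have hm0 : m ≠ 0 := by omega
  have lower : 2 ^ j < 2 ^ (Nat.log 2 m + 3) := by
    have := Nat.lt_pow_succ_log_self one_lt_two m
    have : 2 ^ j < 4 * m := by exact_mod_cast h₁
    grind
  have upper : 2 ^ Nat.log 2 m < 2 ^ (j + 3) := by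
    have := Nat.pow_log_le_self 2 hm0
    have : m < 8 * 2 ^ j := by exact_mod_cast h₂
    grind
  have := (Nat.pow_lt_pow_iff_right one_lt_two).1 lower
  have := (Nat.pow_lt_pow_iff_right one_lt_two).1 upper
  rw [Finset.mem_Icc]
  omega

lemma sum_energy_dyadicBlock_le {M : ℝ → ℝ} (hM : ∀ x, 0 ≤ M x) (J : Finset ℕ) (u : FC) :
    ∑ j ∈ J, energy M I ((dyadicBlock j).indicator u) ≤ energy M I u := by
  classical
  have at_most_one (k : ℤ) : {j ∈ J | k ∈ dyadicBlock j}.card ≤ 1 := by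
    refine Finset.card_le_one.2 fun i hi j hj ↦ ?_
    rw [eq_log_of_mem_dyadicBlock (Finset.mem_filter.1 hi).2,
      eq_log_of_mem_dyadicBlock (Finset.mem_filter.1 hj).2]
  simpa only [Nat.cast_one, one_mul] using sum_energy_indicator_le hM at_most_one u

lemma sum_energy_partnerBlock_le {M : ℝ → ℝ} (hM : ∀ x, 0 ≤ M x) (J : Finset ℕ) (u : FC) :
    ∑ j ∈ J, energy M I ((partnerBlock j).indicator u) ≤ 5 * energy M I u := by
  classical
  refine sum_energy_indicator_le (n := 5) hM (fun k ↦ ?_) u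
  refine (Finset.card_le_card (t := Finset.Icc _ _) fun j hj ↦
    mem_Icc_log_of_mem_partnerBlock (Finset.mem_filter.1 hj).2).trans ?_
  rw [Nat.card_Icc]
  omega

lemma commutatorKernel_mul_eq_sum_blocks (M : ℝ → ℝ) {y : ℤ} (hy : y ∈ I) (z : ℤ) (u : FC) :
    (commutatorKernel M y (-z) : ℂ) * (Set.Ioi 0).indicator u y * u z
      = ∑ j ∈ I.image (fun k ↦ Nat.log 2 k.toNat), (commutatorKernel M y (-z) : ℂ)
          * (dyadicBlock j).indicator u y * (partnerBlock j).indicator u z := by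
  by_cases hy0 : 0 < y
  · rw [Finset.sum_eq_single_of_mem _ (Finset.mem_image_of_mem _ hy)]
    · rw [Set.indicator_of_mem (s := Set.Ioi 0) hy0, Set.indicator_of_mem (mem_dyadicBlock_log hy0)]
      by_cases hcut : cutoff y (-z) = 0
      · simp only [commutatorKernel, hcut, zero_mul, Complex.ofReal_zero]
      · obtain ⟨hyz, hzy⟩ := comparable_of_cutoff_ne_zero (by exact_mod_cast hy0) hcut
        have hyz : y < 4 * -z := by exact_mod_cast hyz
        have hzy : -z < 4 * y := by exact_mod_cast hzy
        obtain ⟨h₁, h₂⟩ := mem_dyadicBlock_log hy0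
        rw [Set.indicator_of_mem (s := partnerBlock _) ⟨by linarith, by grind⟩]
    · intro j _ hj
      rw [Set.indicator_of_notMem fun h ↦ hj (eq_log_of_mem_dyadicBlock h), mul_zero, zero_mul]
  · rw [Set.indicator_of_notMem (s := Set.Ioi 0) hy0, mul_zero, zero_mul]
    refine (Finset.sum_eq_zero fun j _ ↦ ?_).symm
    have notMem : y ∉ dyadicBlock j := fun h ↦ hy0 ((pow_pos zero_lt_two j).trans_le h.1)
    rw [Set.indicator_of_notMem notMem, mul_zero, zero_mul]

namespace IsCommutatorWeight

variable {K : ℝ} {M : ℝ → ℝ} (hM : IsCommutatorWeight K M)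
include hM

lemma norm_tripleSum_commutatorKernel_block_le (w u : FC) (j : ℕ) :
    ‖tripleSum I (fun x y z ↦ w x * (commutatorKernel M y (-z) : ℂ)
        * (dyadicBlock j).indicator u y * (partnerBlock j).indicator u z)‖
      ≤ 10 * K * M (8 * 2 ^ j) * (‖trigPoly I w‖ *
          (l2Norm I ((dyadicBlock j).indicator u) * l2Norm I ((partnerBlock j).indicator u))) := by
  have hn : (0 : ℝ) < 2 ^ j := by positivity
  have := hM.one_le
  have := hM.nonneg (8 * 2 ^ j)
  refine (norm_tripleSum_kernel_le (a := 2 ^ j) (b := 2 ^ (j + 1))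
    (Q₀ := 3 * K * M (8 * 2 ^ j)) (Q := fun _ ↦ 7 * K * (M (8 * 2 ^ j) / 2 ^ j))
    (K := fun y z ↦ (commutatorKernel M y (-z) : ℂ)) (f := (dyadicBlock j).indicator u)
    (fun y hy ↦ Set.Ico_subset_Icc_self (Set.mem_of_indicator_ne_zero hy)) (by positivity)
    (fun _ ↦ by positivity) (fun z _ ↦ ?_) fun m hm z _ ↦ ?_).trans_eq ?_
  · rw [Complex.norm_real]
    push_cast
    exact hM.abs_commutatorKernel_le hn ⟨le_rfl, by linarith⟩ _
  · obtain ⟨h₁, h₂⟩ := Finset.mem_Ico.1 hm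
    rw [← Complex.ofReal_sub, Complex.norm_real]
    have hlow : (2 : ℝ) ^ j ≤ m := by exact_mod_cast h₁
    have hupp : (m : ℝ) + 1 ≤ 2 * 2 ^ j := by
      rw [← pow_succ']
      exact_mod_cast h₂
    have hdiff := hM.abs_commutatorKernel_sub_le hn hlow (by linarith) hupp (-z)
    rw [add_sub_cancel_left, mul_one] at hdiff
    exact_mod_cast hdiff
  · have card : ((2 ^ (j + 1) - 2 ^ j : ℤ).toNat : ℝ) = 2 ^ j := by
      rw [show (2 ^ (j + 1) - 2 ^ j : ℤ) = ((2 ^ j : ℕ) : ℤ) by push_cast; ring, Int.toNat_natCast]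
      push_cast
      rfl
    rw [Finset.sum_const, Int.card_Ico, nsmul_eq_mul, card]
    field_simp
    ring

lemma norm_tripleSum_commutatorKernel_block_le_energy (w u : FC) (j : ℕ) :
    ‖tripleSum I (fun x y z ↦ w x * (commutatorKernel M y (-z) : ℂ)
        * (dyadicBlock j).indicator u y * (partnerBlock j).indicator u z)‖
      ≤ 5 * K ^ 6 * ‖trigPoly I w‖
          * (energy M I ((dyadicBlock j).indicator u)
            + energy M I ((partnerBlock j).indicator u)) := by
  have := hM.one_le
  have hn : (0 : ℝ) < 2 ^ j := by positivity
  have weight_le {k : ℤ} (hk : (2 : ℝ) ^ j ≤ 4 * |(k : ℝ)|) : M (8 * 2 ^ j) ≤ K ^ 5 * M k :=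
    hM.le_pow_mul_of_le 5 (by positivity) (by linarith)
  have block_le := mul_l2Norm_indicator_sq_le (I := I) (S := dyadicBlock j) u fun k hk ↦
    weight_le <| by
    have : (2 : ℝ) ^ j ≤ k := by exact_mod_cast hk.1
    linarith [le_abs_self (k : ℝ)]
  have partner_le := mul_l2Norm_indicator_sq_le (I := I) (S := partnerBlock j) u fun k hk ↦
    weight_le <| by
    have : (2 : ℝ) ^ j < 4 * -k := by exact_mod_cast hk.1
    linarith [neg_le_abs (k : ℝ)]
  refine (hM.norm_tripleSum_commutatorKernel_block_le w u j).trans ?_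
  set p := l2Norm I ((dyadicBlock j).indicator u)
  set q := l2Norm I ((partnerBlock j).indicator u)
  have amgm : M (8 * 2 ^ j) * (2 * (p * q)) ≤ M (8 * 2 ^ j) * (p ^ 2 + q ^ 2) := by
    have := hM.nonneg (8 * 2 ^ j)
    gcongr
    linarith [two_mul_le_add_sq p q]
  calc 10 * K * M (8 * 2 ^ j) * (‖trigPoly I w‖ * (p * q))
      = 5 * K * ‖trigPoly I w‖ * (M (8 * 2 ^ j) * (2 * (p * q))) := by ring
    _ ≤ 5 * K * ‖trigPoly I w‖ * (K ^ 5 * energy M I ((dyadicBlock j).indicator u)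
          + K ^ 5 * energy M I ((partnerBlock j).indicator u)) := by
        gcongr
        linarith
    _ = _ := by ring

theorem norm_tripleSum_commutatorKernel_le (w u : FC) :
    ‖tripleSum I (fun x y z ↦
        w x * (commutatorKernel M y (-z) : ℂ) * (Set.Ioi 0).indicator u y * u z)‖
      ≤ 30 * K ^ 6 * ‖trigPoly I w‖ * energy M I u := by
  have := hM.one_le
  set J := I.image fun k ↦ Nat.log 2 k.toNat
  have into_blocks : tripleSum I (fun x y z ↦
        w x * (commutatorKernel M y (-z) : ℂ) * (Set.Ioi 0).indicator u y * u z)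
      = ∑ j ∈ J, tripleSum I (fun x y z ↦ w x * (commutatorKernel M y (-z) : ℂ)
        * (dyadicBlock j).indicator u y * (partnerBlock j).indicator u z) := by
    rw [← tripleSum_sum]
    refine tripleSum_congr fun x _ y hy z _ _ ↦ ?_
    simp only [mul_assoc (w x)]
    rw [← Finset.mul_sum, commutatorKernel_mul_eq_sum_blocks M hy]
  rw [into_blocks]
  calc _ ≤ ∑ j ∈ J, 5 * K ^ 6 * ‖trigPoly I w‖ * (energy M I ((dyadicBlock j).indicator u)
            + energy M I ((partnerBlock j).indicator u)) :=
        (norm_sum_le _ _).trans <| Finset.sum_le_sum fun j _ ↦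
          hM.norm_tripleSum_commutatorKernel_block_le_energy w u j
    _ ≤ 5 * K ^ 6 * ‖trigPoly I w‖ * (energy M I u + 5 * energy M I u) := by
        rw [← Finset.mul_sum, Finset.sum_add_distrib]
        gcongr
        · exact sum_energy_dyadicBlock_le hM.nonneg J u
        · exact sum_energy_partnerBlock_le hM.nonneg J u
    _ = 30 * K ^ 6 * ‖trigPoly I w‖ * energy M I u := by ring

end IsCommutatorWeight

end Dyadic

section Symmetrization

variable {I : Finset ℤ} {K : ℝ} {M : ℝ → ℝ}

namespace IsCommutatorWeight

variable (hM : IsCommutatorWeight K M)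
include hM

lemma mul_commutatorKernel {x y z : ℤ} (h : x + y + z = 0) :
    (x : ℝ) * commutatorKernel M y (-z)
      = cutoff y (-z) * (derivSymbol M x + derivSymbol M y + derivSymbol M z) := by
  have hx : (x : ℝ) = -z - y := by
    have : (x : ℝ) + y + z = 0 := by exact_mod_cast h
    linarith
  rw [commutatorKernel, mul_left_comm, hx, hM.sub_mul_commutatorSymbol, hM.derivSymbol_neg,
    sub_neg_eq_add]

lemma sum_cyclic_mul_commutatorKernel {x y z : ℤ} (h : x + y + z = 0) :
    (x : ℝ) * commutatorKernel M y (-z) + y * commutatorKernel M z (-x)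
        + z * commutatorKernel M x (-y)
      = derivSymbol M x + derivSymbol M y + derivSymbol M z := by
  rw [hM.mul_commutatorKernel h, hM.mul_commutatorKernel (x := y) (y := z) (z := x) (by omega),
    hM.mul_commutatorKernel (x := z) (y := x) (z := y) (by omega)]
  by_cases h0 : x = 0 ∧ y = 0
  · obtain ⟨rfl, rfl⟩ := h0
    obtain rfl : z = 0 := by omega
    simp [derivSymbol]
  · have partition : cutoff (y : ℝ) (-z) + cutoff (z : ℝ) (-x) + cutoff (x : ℝ) (-y) = 1 := by
      refine cutoff_partition (by exact_mod_cast h) ?_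
      rw [← not_and_or]
      exact_mod_cast h0
    linear_combination (derivSymbol M x + derivSymbol M y + derivSymbol M z) * partition

lemma tripleSum_derivSymbol_eq (u : FC) :
    tripleSum I (fun x y z ↦ (derivSymbol M z : ℂ) * (u x * u y * u z))
      = tripleSum I (fun x y z ↦
          ((x * commutatorKernel M y (-z) : ℝ) : ℂ) * (u x * u y * u z)) := by
  have three_mul_of_cyclic (A B : ℤ → ℤ → ℤ → ℂ) (h : ∀ x y z, x + y + z = 0 →
      A x y z + A y z x + A z x y = B x y z + B y z x + B z x y) :
      tripleSum I A = tripleSum I B := by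
    have three_mul (F : ℤ → ℤ → ℤ → ℂ) :
        3 * tripleSum I F = tripleSum I (fun x y z ↦ F x y z + F y z x + F z x y) := by
      rw [tripleSum_add, tripleSum_add, tripleSum_rotate F,
        ← tripleSum_rotate fun x y z ↦ F z x y]
      ring
    refine mul_left_cancel₀ (three_ne_zero (α := ℂ)) ?_
    rw [three_mul, three_mul]
    exact tripleSum_congr fun x _ y _ z _ hxyz ↦ h x y z hxyz
  refine three_mul_of_cyclic _ _ fun x y z hxyz ↦ ?_
  have cyclic := congrArg (fun r : ℝ ↦ (r : ℂ)) (hM.sum_cyclic_mul_commutatorKernel hxyz)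
  push_cast at cyclic ⊢
  linear_combination -(u x * u y * u z) * cyclic

lemma tripleSum_commutatorKernel_eq_two_mul (u : FC) :
    tripleSum I (fun x y z ↦ ((x * commutatorKernel M y (-z) : ℝ) : ℂ) * (u x * u y * u z))
      = 2 * tripleSum I (fun x y z ↦ (x * u x) * (commutatorKernel M y (-z) : ℂ)
          * (Set.Ioi 0).indicator u y * u z) := by
  set G : ℤ → ℤ → ℤ → ℂ := fun x y z ↦ (x * u x) * (commutatorKernel M y (-z) : ℂ)
    * (Set.Ioi 0).indicator u y * u z with hG
  rw [two_mul]
  nth_rw 2 [← tripleSum_swap_right]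
  rw [← tripleSum_add]
  refine tripleSum_congr fun x _ y _ z _ h ↦ ?_
  have symm : (x : ℝ) * commutatorKernel M z (-y) = x * commutatorKernel M y (-z) := by
    rw [hM.mul_commutatorKernel h, hM.mul_commutatorKernel (x := x) (y := z) (z := y) (by omega),
      cutoff_neg_right_comm (y : ℝ) z, add_right_comm]
  have symm := congrArg (fun r : ℝ ↦ (r : ℂ)) symm
  have vanish (hyz : 0 ≤ y * z) : commutatorKernel M y (-z) = 0 := by
    have : (y : ℝ) * -z ≤ 0 := by
      rw [mul_neg, neg_nonpos]
      exact_mod_cast hyz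
    rw [commutatorKernel, cutoff_eq_zero_of_mul_nonpos this, zero_mul]
  simp only [hG, Set.indicator_apply, Set.mem_Ioi]
  push_cast at symm ⊢
  split_ifs with hz hy hy
  · rw [vanish (by positivity), Complex.ofReal_zero] at symm ⊢
    linear_combination (-u x * u y * u z) * symm
  · linear_combination (-u x * u y * u z) * symm
  · ring
  · rw [vanish (by nlinarith)]
    simp

/-- Symmetrizing in the first two frequencies puts the derivative on the third, so that only the
cyclic sum of `derivSymbol M` remains; the cutoff then returns the derivative to the factor whose
frequency may be low. -/
theorem tripleSum_mul_D1_eq (u : FC) :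
    tripleSum I (fun x y z ↦ (M z : ℂ) * (u x * D1 u y * u z))
      = -tripleSum I (fun x y z ↦ D1 u x * (commutatorKernel M y (-z) : ℂ)
          * (Set.Ioi 0).indicator u y * u z) := by
  have symmetrized : 2 * tripleSum I (fun x y z ↦ (M z : ℂ) * (u x * D1 u y * u z))
      = -Complex.I * tripleSum I (fun x y z ↦ (derivSymbol M z : ℂ) * (u x * u y * u z)) := by
    rw [two_mul, ← tripleSum_const_mul]
    nth_rw 2 [← tripleSum_swap_left]
    rw [← tripleSum_add]
    refine tripleSum_congr fun x _ y _ z _ h ↦ ?_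
    have hz : (x : ℂ) + y + z = 0 := by exact_mod_cast h
    simp only [D1, derivSymbol]
    push_cast
    linear_combination Complex.I * M z * u x * u y * u z * hz
  have derivative_out : tripleSum I (fun x y z ↦ D1 u x * (commutatorKernel M y (-z) : ℂ)
        * (Set.Ioi 0).indicator u y * u z)
      = Complex.I * tripleSum I (fun x y z ↦ (x * u x) * (commutatorKernel M y (-z) : ℂ)
        * (Set.Ioi 0).indicator u y * u z) := by
    rw [← tripleSum_const_mul]
    refine tripleSum_congr fun x _ y _ z _ _ ↦ ?_
    rw [D1]
    ring
  refine mul_left_cancel₀ (two_ne_zero (α := ℂ)) ?_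
  rw [symmetrized, hM.tripleSum_derivSymbol_eq, hM.tripleSum_commutatorKernel_eq_two_mul,
    derivative_out]
  ring

theorem norm_tripleSum_mul_D1_le (u : FC) :
    ‖tripleSum I (fun x y z ↦ (M z : ℂ) * (u x * D1 u y * u z))‖
      ≤ 30 * K ^ 6 * ‖trigPoly I (D1 u)‖ * energy M I u := by
  rw [hM.tripleSum_mul_D1_eq, norm_neg]
  exact hM.norm_tripleSum_commutatorKernel_le (D1 u) u

end IsCommutatorWeight

end Symmetrization

section SmoothedWeight

/-- The weight `(1+x²)^s (1+ε²x²)⁻²` with `‖T̃_ε u‖²_{H^s} = Σ_k M(k) |û(k)|²`. -/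
def smoothedWeight (s ε x : ℝ) : ℝ := (1 + x ^ 2) ^ s * ((1 + ε ^ 2 * x ^ 2) ^ 2)⁻¹

/-- Half the logarithmic derivative of `1 + a x²`. -/
def halfLogDeriv (a x : ℝ) : ℝ := a * x / (1 + a * x ^ 2)

/-- The logarithmic derivative of `smoothedWeight s ε`. -/
def smoothedLogDeriv (s ε x : ℝ) : ℝ := 2 * s * halfLogDeriv 1 x - 4 * halfLogDeriv (ε ^ 2) x

variable {a s ε x R : ℝ}

lemma abs_halfLogDeriv_le (ha : a ∈ Set.Icc 0 1) : |halfLogDeriv a x| ≤ |x| / (1 + x ^ 2) := by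
  have := ha.1
  rw [halfLogDeriv, abs_div, abs_mul, abs_of_nonneg ha.1,
    abs_of_pos (show 0 < 1 + a * x ^ 2 by positivity),
    div_le_div_iff₀ (by positivity) (by positivity)]
  nlinarith [mul_nonneg (sub_nonneg.2 ha.2) (abs_nonneg x)]

lemma abs_deriv_mul_halfLogDeriv_le (ha : a ∈ Set.Icc 0 1) :
    |2 * (a * x) / (1 + a * x ^ 2) ^ 2| ≤ 2 * (|x| / (1 + x ^ 2)) := by
  have := ha.1
  have one_le : 1 ≤ 1 + a * x ^ 2 := le_add_of_nonneg_right (by positivity)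
  calc |2 * (a * x) / (1 + a * x ^ 2) ^ 2| = 2 * (|halfLogDeriv a x| / (1 + a * x ^ 2)) := by
        rw [sq, ← div_div, mul_div_assoc, ← halfLogDeriv, abs_div, abs_mul, abs_two,
          abs_of_pos (zero_lt_one.trans_le one_le), mul_div_assoc]
    _ ≤ 2 * |halfLogDeriv a x| := by
        gcongr
        exact div_le_self (abs_nonneg _) one_le
    _ ≤ 2 * (|x| / (1 + x ^ 2)) := by
        gcongr
        exact abs_halfLogDeriv_le ha

lemma hasDerivAt_one_add_mul_sq (a x : ℝ) :
    HasDerivAt (fun y : ℝ ↦ 1 + a * y ^ 2) (a * (2 * x)) x := by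
  simpa using ((hasDerivAt_pow 2 x).const_mul a).const_add 1

lemma hasDerivAt_mul_halfLogDeriv (ha : 0 ≤ a) (x : ℝ) :
    HasDerivAt (fun y ↦ y * halfLogDeriv a y) (2 * (a * x) / (1 + a * x ^ 2) ^ 2) x := by
  have eq_one_sub_inv : (fun y ↦ y * halfLogDeriv a y) = fun y ↦ 1 - (1 + a * y ^ 2)⁻¹ := by
    funext y
    have : 0 < 1 + a * y ^ 2 := by positivity
    rw [halfLogDeriv]
    field_simp
    ring
  rw [eq_one_sub_inv]
  refine (((hasDerivAt_one_add_mul_sq a x).fun_inv (by positivity)).const_sub 1).congr_deriv ?_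
  ring

lemma smoothedWeight_nonneg (s ε x : ℝ) : 0 ≤ smoothedWeight s ε x := by
  rw [smoothedWeight]
  positivity

lemma hasDerivAt_smoothedWeight (s ε x : ℝ) :
    HasDerivAt (smoothedWeight s ε) (smoothedWeight s ε x * smoothedLogDeriv s ε x) x := by
  have h : 0 < 1 + x ^ 2 := by positivity
  have deriv_rpow : HasDerivAt (fun y : ℝ ↦ (1 + y ^ 2) ^ s)
      (2 * x * s * (1 + x ^ 2) ^ (s - 1)) x := by
    simpa using (hasDerivAt_one_add_mul_sq 1 x).rpow_const (p := s) (Or.inl (by positivity))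
  have deriv_inv := ((hasDerivAt_one_add_mul_sq (ε ^ 2) x).fun_pow 2).fun_inv (by positivity)
  refine (deriv_rpow.fun_mul deriv_inv).congr_deriv ?_
  rw [smoothedWeight, smoothedLogDeriv, halfLogDeriv, halfLogDeriv, Real.rpow_sub_one h.ne']
  field_simp
  ring

lemma hasDerivAt_mul_smoothedLogDeriv (s ε x : ℝ) :
    HasDerivAt (fun y ↦ 1 + y * smoothedLogDeriv s ε y)
      (2 * s * (2 * (1 * x) / (1 + 1 * x ^ 2) ^ 2)
        - 4 * (2 * (ε ^ 2 * x) / (1 + ε ^ 2 * x ^ 2) ^ 2)) x := by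
  have split : (fun y ↦ 1 + y * smoothedLogDeriv s ε y)
      = fun y ↦ 1 + (2 * s * (y * halfLogDeriv 1 y) - 4 * (y * halfLogDeriv (ε ^ 2) y)) := by
    funext y
    rw [smoothedLogDeriv]
    ring
  rw [split]
  exact (((hasDerivAt_mul_halfLogDeriv zero_le_one x).const_mul (2 * s)).fun_sub
    ((hasDerivAt_mul_halfLogDeriv (sq_nonneg ε) x).const_mul 4)).const_add 1

lemma deriv_derivSymbol_smoothedWeight (s ε : ℝ) :
    deriv (derivSymbol (smoothedWeight s ε))
      = fun x ↦ smoothedWeight s ε x * (1 + x * smoothedLogDeriv s ε x) := by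
  funext x
  have product_rule := (hasDerivAt_id x).fun_mul (hasDerivAt_smoothedWeight s ε x)
  refine (product_rule.congr_deriv ?_).deriv
  simp only [id]
  ring

lemma hasDerivAt_deriv_derivSymbol_smoothedWeight (s ε x : ℝ) :
    HasDerivAt (deriv (derivSymbol (smoothedWeight s ε)))
      (smoothedWeight s ε x * (smoothedLogDeriv s ε x * (1 + x * smoothedLogDeriv s ε x)
        + (2 * s * (2 * (1 * x) / (1 + 1 * x ^ 2) ^ 2)
          - 4 * (2 * (ε ^ 2 * x) / (1 + ε ^ 2 * x ^ 2) ^ 2)))) x := by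
  rw [deriv_derivSymbol_smoothedWeight]
  refine ((hasDerivAt_smoothedWeight s ε x).fun_mul
    (hasDerivAt_mul_smoothedLogDeriv s ε x)).congr_deriv ?_
  ring

lemma abs_smoothedLogDeriv_le (hs : 0 ≤ s) (hε : ε ^ 2 ≤ 1) :
    |smoothedLogDeriv s ε x| ≤ (2 * s + 4) * (|x| / (1 + x ^ 2)) := by
  have bound_one := abs_halfLogDeriv_le (x := x) (Set.right_mem_Icc.2 zero_le_one)
  have bound_sq := abs_halfLogDeriv_le (x := x) ⟨sq_nonneg ε, hε⟩
  calc |smoothedLogDeriv s ε x|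
      ≤ |2 * s * halfLogDeriv 1 x| + |4 * halfLogDeriv (ε ^ 2) x| := abs_sub _ _
    _ = 2 * s * |halfLogDeriv 1 x| + 4 * |halfLogDeriv (ε ^ 2) x| := by
        rw [abs_mul, abs_mul 4, abs_of_nonneg (by positivity : 0 ≤ 2 * s), Nat.abs_ofNat]
    _ ≤ 2 * s * (|x| / (1 + x ^ 2)) + 4 * (|x| / (1 + x ^ 2)) := by gcongr
    _ = (2 * s + 4) * (|x| / (1 + x ^ 2)) := by ring

lemma abs_one_add_mul_smoothedLogDeriv_le (hs : 0 ≤ s) (hε : ε ^ 2 ≤ 1) :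
    |1 + x * smoothedLogDeriv s ε x| ≤ 2 * s + 5 := by
  have : |x| * (|x| / (1 + x ^ 2)) ≤ 1 := by
    rw [← mul_div_assoc, div_le_one (by positivity), abs_mul_abs_self]
    linarith [sq x]
  calc |1 + x * smoothedLogDeriv s ε x| ≤ 1 + |x| * |smoothedLogDeriv s ε x| := by
        simpa only [abs_one, abs_mul] using abs_add_le 1 (x * smoothedLogDeriv s ε x)
    _ ≤ 1 + |x| * ((2 * s + 4) * (|x| / (1 + x ^ 2))) := by
        gcongr
        exact abs_smoothedLogDeriv_le hs hε
    _ = 1 + (2 * s + 4) * (|x| * (|x| / (1 + x ^ 2))) := by ring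
    _ ≤ 1 + (2 * s + 4) * 1 := by gcongr
    _ = 2 * s + 5 := by ring

lemma abs_deriv_mul_smoothedLogDeriv_le (hs : 0 ≤ s) (hε : ε ^ 2 ≤ 1) :
    |2 * s * (2 * (1 * x) / (1 + 1 * x ^ 2) ^ 2)
        - 4 * (2 * (ε ^ 2 * x) / (1 + ε ^ 2 * x ^ 2) ^ 2)|
      ≤ (4 * s + 8) * (|x| / (1 + x ^ 2)) := by
  have bound_one := abs_deriv_mul_halfLogDeriv_le (x := x) (Set.right_mem_Icc.2 zero_le_one)
  have bound_sq := abs_deriv_mul_halfLogDeriv_le (x := x) ⟨sq_nonneg ε, hε⟩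
  refine (abs_sub _ _).trans ?_
  rw [abs_mul, abs_mul 4, abs_of_nonneg (by positivity : 0 ≤ 2 * s), Nat.abs_ofNat]
  calc _ ≤ 2 * s * (2 * (|x| / (1 + x ^ 2))) + 4 * (2 * (|x| / (1 + x ^ 2))) := by gcongr
    _ = (4 * s + 8) * (|x| / (1 + x ^ 2)) := by ring

/-- The factor of `smoothedWeight s ε x` left after extracting `√(1 + x²)`. -/
def reducedWeight (s ε x : ℝ) : ℝ :=
  (1 + x ^ 2) ^ (s - 5 / 2) * ((1 + x ^ 2) / (1 + ε ^ 2 * x ^ 2)) ^ 2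

lemma reducedWeight_nonneg (s ε x : ℝ) : 0 ≤ reducedWeight s ε x := by
  rw [reducedWeight]
  positivity

lemma smoothedWeight_eq_reducedWeight_mul_sqrt (s ε x : ℝ) :
    smoothedWeight s ε x = reducedWeight s ε x * √(1 + x ^ 2) := by
  have h : 0 < 1 + x ^ 2 := by positivity
  have split_power :
      (1 + x ^ 2) ^ s = (1 + x ^ 2) ^ (s - 5 / 2) * (1 + x ^ 2) ^ 2 * √(1 + x ^ 2) := by
    rw [Real.sqrt_eq_rpow, ← Real.rpow_natCast (1 + x ^ 2) 2, ← Real.rpow_add h, ← Real.rpow_add h]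
    congr 1
    push_cast
    ring
  rw [smoothedWeight, reducedWeight, split_power]
  field_simp

lemma reducedWeight_le_of_abs_le (hs : 5 / 2 ≤ s) (hε : ε ^ 2 ≤ 1) (hx : |x| ≤ R) :
    reducedWeight s ε x ≤ reducedWeight s ε R := by
  have hsq : x ^ 2 ≤ R ^ 2 := sq_le_sq.2 (hx.trans (le_abs_self R))
  have quotient_le : (1 + x ^ 2) / (1 + ε ^ 2 * x ^ 2) ≤ (1 + R ^ 2) / (1 + ε ^ 2 * R ^ 2) := by
    rw [div_le_div_iff₀ (by positivity) (by positivity)]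
    nlinarith [mul_nonneg (sub_nonneg.2 hε) (sub_nonneg.2 hsq)]
  have := sub_nonneg.2 hs
  unfold reducedWeight
  gcongr

lemma smoothedWeight_le_of_abs_le (hs : 5 / 2 ≤ s) (hε : ε ^ 2 ≤ 1) (hx : |x| ≤ R) :
    smoothedWeight s ε x ≤ smoothedWeight s ε R := by
  have hsq : x ^ 2 ≤ R ^ 2 := sq_le_sq.2 (hx.trans (le_abs_self R))
  have := reducedWeight_le_of_abs_le hs hε hx
  have := reducedWeight_nonneg s ε R
  rw [smoothedWeight_eq_reducedWeight_mul_sqrt, smoothedWeight_eq_reducedWeight_mul_sqrt]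
  gcongr

lemma smoothedWeight_mul_abs_div_le (hs : 5 / 2 ≤ s) (hε : ε ^ 2 ≤ 1) (hR : 0 < R)
    (hx : |x| ≤ R) :
    smoothedWeight s ε x * (|x| / (1 + x ^ 2)) ≤ smoothedWeight s ε R / R := by
  have h : 0 < 1 + x ^ 2 := by positivity
  have abs_le_sqrt : |x| ≤ √(1 + x ^ 2) := Real.abs_le_sqrt (by linarith)
  have le_sqrt : R ≤ √(1 + R ^ 2) := Real.le_sqrt_of_sq_le (by linarith)
  have := reducedWeight_nonneg s ε x
  have := reducedWeight_nonneg s ε R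
  calc smoothedWeight s ε x * (|x| / (1 + x ^ 2))
      = reducedWeight s ε x * (√(1 + x ^ 2) * |x| / (1 + x ^ 2)) := by
        rw [smoothedWeight_eq_reducedWeight_mul_sqrt]
        ring
    _ ≤ reducedWeight s ε x * (√(1 + x ^ 2) * √(1 + x ^ 2) / (1 + x ^ 2)) := by gcongr
    _ = reducedWeight s ε x := by rw [Real.mul_self_sqrt h.le, div_self h.ne', mul_one]
    _ ≤ reducedWeight s ε R := reducedWeight_le_of_abs_le hs hε hx
    _ ≤ smoothedWeight s ε R / R := by
        rw [le_div_iff₀ hR, smoothedWeight_eq_reducedWeight_mul_sqrt]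
        gcongr

lemma smoothedWeight_two_mul_le (hs : 0 ≤ s) (ε x : ℝ) :
    smoothedWeight s ε (2 * x) ≤ 4 ^ s * smoothedWeight s ε x := by
  have hsq : x ^ 2 ≤ (2 * x) ^ 2 := by nlinarith [sq_nonneg x]
  have base_le : 1 + (2 * x) ^ 2 ≤ 4 * (1 + x ^ 2) := by linarith [mul_pow 2 x 2]
  rw [smoothedWeight, smoothedWeight, ← mul_assoc, ← Real.mul_rpow (by positivity) (by positivity)]
  gcongr

lemma abs_smoothedWeight_mul_le {A q : ℝ} (hs : 5 / 2 ≤ s) (hε : ε ^ 2 ≤ 1) (hR : 0 < R)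
    (hx : |x| ≤ R) (hA : 0 ≤ A) (hq : |q| ≤ A * (|x| / (1 + x ^ 2))) :
    |smoothedWeight s ε x * q| ≤ A * (smoothedWeight s ε R / R) := by
  have := smoothedWeight_nonneg s ε x
  calc |smoothedWeight s ε x * q| = smoothedWeight s ε x * |q| := by
        rw [abs_mul, abs_of_nonneg this]
    _ ≤ smoothedWeight s ε x * (A * (|x| / (1 + x ^ 2))) := by gcongr
    _ = A * (smoothedWeight s ε x * (|x| / (1 + x ^ 2))) := mul_left_comm _ _ _
    _ ≤ A * (smoothedWeight s ε R / R) := by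
        gcongr
        exact smoothedWeight_mul_abs_div_le hs hε hR hx

theorem isCommutatorWeight_smoothedWeight (hs : 5 / 2 ≤ s) (hε : ε ^ 2 ≤ 1) :
    IsCommutatorWeight ((2 * s + 4) * (2 * s + 5) + (4 * s + 8) + 4 ^ s) (smoothedWeight s ε) := by
  have hs₀ : 0 ≤ s := by linarith
  have h4 : (0 : ℝ) ≤ 4 ^ s := by positivity
  refine
    { one_le := by nlinarith
      even := fun x ↦ by simp only [smoothedWeight, neg_sq]
      nonneg := smoothedWeight_nonneg s ε
      mono := smoothedWeight_le_of_abs_le hs hε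
      doubling := fun x ↦ (smoothedWeight_two_mul_le hs₀ ε x).trans
        (mul_le_mul_of_nonneg_right (by nlinarith) (smoothedWeight_nonneg s ε x))
      differentiable := fun x ↦ (hasDerivAt_smoothedWeight s ε x).differentiableAt
      differentiable_deriv := fun x ↦
        (hasDerivAt_deriv_derivSymbol_smoothedWeight s ε x).differentiableAt
      abs_deriv_le := fun {x R} hR hx ↦ ?_
      abs_deriv_deriv_le := fun {x R} hR hx ↦ ?_ }
  all_goals
    have logDeriv_le := abs_smoothedLogDeriv_le (x := x) hs₀ hε
    have hfrac : 0 ≤ |x| / (1 + x ^ 2) := by positivity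
  · rw [(hasDerivAt_smoothedWeight s ε x).deriv]
    exact abs_smoothedWeight_mul_le hs hε hR hx (by positivity)
      (logDeriv_le.trans (mul_le_mul_of_nonneg_right (by nlinarith) hfrac))
  · rw [(hasDerivAt_deriv_derivSymbol_smoothedWeight s ε x).deriv]
    refine abs_smoothedWeight_mul_le hs hε hR hx (by positivity) ((abs_add_le _ _).trans ?_)
    rw [abs_mul]
    have product_le := mul_le_mul logDeriv_le
      (abs_one_add_mul_smoothedLogDeriv_le (x := x) hs₀ hε) (abs_nonneg _) (by positivity)
    have remainder_le := abs_deriv_mul_smoothedLogDeriv_le (x := x) hs₀ hε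
    nlinarith [mul_nonneg h4 hfrac]

end SmoothedWeight

section Summability

variable {r s ε : ℝ} {u v w : FC}

lemma wt_nonneg (s : ℝ) (k : ℤ) : 0 ≤ wt s k := by
  rw [wt]
  positivity

lemma wt_mul_wt (s t : ℝ) (k : ℤ) : wt s k * wt t k = wt (s + t) k :=
  (Real.rpow_add (by positivity) s t).symm

lemma wt_half_sq (s : ℝ) (k : ℤ) : wt (s / 2) k ^ 2 = wt s k := by
  rw [sq, wt_mul_wt, add_halves]

lemma abs_le_wt_half (k : ℤ) : |(k : ℝ)| ≤ wt (1 / 2) k := by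
  rw [wt, ← Real.sqrt_eq_rpow]
  exact Real.abs_le_sqrt (by linarith)

lemma wt_add_le (hr : 0 ≤ r) (j k : ℤ) : wt r (j + k) ≤ 2 ^ r * (wt r j * wt r k) := by
  rw [wt, wt, wt, ← Real.mul_rpow (by positivity) (by positivity),
    ← Real.mul_rpow (by positivity) (by positivity)]
  refine Real.rpow_le_rpow (by positivity) ?_ hr
  push_cast
  nlinarith [sq_nonneg ((j : ℝ) - k), sq_nonneg ((j : ℝ) * k)]

lemma summable_wt (hr : r < -1 / 2) : Summable (wt r) := by
  refine (Real.summable_abs_int_rpow (b := -(2 * r)) (by linarith)).of_norm_bounded_eventually ?_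
  filter_upwards [(Set.finite_singleton (0 : ℤ)).compl_mem_cofinite] with k hk
  have hk : (k : ℝ) ≠ 0 := Int.cast_ne_zero.2 hk
  rw [Real.norm_of_nonneg (wt_nonneg r k), neg_neg, Real.rpow_mul (abs_nonneg _), Real.rpow_two,
    sq_abs]
  exact Real.rpow_le_rpow_of_nonpos (by positivity) (by linarith) (by linarith)

lemma memHs.summable_wt_mul_norm (hu : memHs s u) (hr : r < s / 2 - 1 / 4) :
    Summable fun k ↦ wt r k * ‖u k‖ := by
  refine .of_nonneg_of_le (fun k ↦ mul_nonneg (wt_nonneg r k) (norm_nonneg _)) (fun k ↦ ?_)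
    (hu.add (summable_wt (r := 2 * (r - s / 2)) (by linarith)))
  have split : wt r k = wt (s / 2) k * wt (r - s / 2) k := by
    rw [wt_mul_wt, add_sub_cancel]
  have wt_two_mul : wt (2 * (r - s / 2)) k = wt (r - s / 2) k ^ 2 := by
    rw [← wt_half_sq, mul_div_cancel_left₀ _ two_ne_zero]
  rw [split, wt_two_mul, ← wt_half_sq s]
  nlinarith [sq_nonneg (wt (s / 2) k * ‖u k‖ - wt (r - s / 2) k), sq_nonneg (wt (s / 2) k * ‖u k‖),
    sq_nonneg (wt (r - s / 2) k)]

lemma hsNorm_sq (s : ℝ) (c : FC) : hsNorm s c ^ 2 = ∑' k, wt s k * ‖c k‖ ^ 2 :=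
  Real.sq_sqrt (tsum_nonneg fun k ↦ mul_nonneg (wt_nonneg s k) (sq_nonneg _))

lemma memHs.wt_half_mul_norm_le (hu : memHs s u) (k : ℤ) : wt (s / 2) k * ‖u k‖ ≤ hsNorm s u := by
  refine Real.le_sqrt_of_sq_le ?_
  rw [mul_pow, wt_half_sq]
  exact hu.le_tsum k fun j _ ↦ mul_nonneg (wt_nonneg s j) (sq_nonneg _)

lemma smoothedWeight_le_wt (hε : ε ∈ Set.Ioc 0 1) (k : ℤ) :
    smoothedWeight s ε k ≤ (ε ^ 2)⁻¹ * wt (s - 1) k := by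
  have hε₀ := hε.1
  have : 0 ≤ ε ^ 2 * (k : ℝ) ^ 2 := by positivity
  have hle : ε ^ 2 * (1 + (k : ℝ) ^ 2) ≤ (1 + ε ^ 2 * (k : ℝ) ^ 2) ^ 2 := by
    nlinarith [pow_le_one₀ hε.1.le hε.2 (n := 2)]
  rw [wt, Real.rpow_sub_one (by positivity), smoothedWeight]
  calc (1 + (k : ℝ) ^ 2) ^ s * ((1 + ε ^ 2 * (k : ℝ) ^ 2) ^ 2)⁻¹
      ≤ (1 + (k : ℝ) ^ 2) ^ s * (ε ^ 2 * (1 + (k : ℝ) ^ 2))⁻¹ := by gcongr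
    _ = (ε ^ 2)⁻¹ * ((1 + (k : ℝ) ^ 2) ^ s / (1 + (k : ℝ) ^ 2)) := by
        rw [mul_inv]
        ring

lemma smoothedWeight_mul_norm_le (hε : ε ∈ Set.Ioc 0 1) (hu : memHs s u) (k : ℤ) :
    smoothedWeight s ε k * ‖u k‖ ≤ (ε ^ 2)⁻¹ * hsNorm s u * wt (s / 2 - 1) k := by
  have := wt_nonneg (s / 2 - 1) k
  calc smoothedWeight s ε k * ‖u k‖ ≤ (ε ^ 2)⁻¹ * wt (s - 1) k * ‖u k‖ := by
        gcongr
        exact smoothedWeight_le_wt hε k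
    _ = (ε ^ 2)⁻¹ * (wt (s / 2) k * ‖u k‖) * wt (s / 2 - 1) k := by
        rw [show s - 1 = s / 2 + (s / 2 - 1) by ring, ← wt_mul_wt]
        ring
    _ ≤ (ε ^ 2)⁻¹ * hsNorm s u * wt (s / 2 - 1) k := by
        gcongr
        exact hu.wt_half_mul_norm_le k

lemma norm_D1 (u : FC) (k : ℤ) : ‖D1 u k‖ = |(k : ℝ)| * ‖u k‖ := by
  rw [D1, norm_mul, norm_mul, Complex.norm_I, one_mul, Complex.norm_intCast]

lemma wt_mul_norm_D1_le (r : ℝ) (u : FC) (k : ℤ) :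
    wt r k * ‖D1 u k‖ ≤ wt (r + 1 / 2) k * ‖u k‖ := by
  rw [norm_D1, ← mul_assoc, ← wt_mul_wt]
  gcongr
  · exact wt_nonneg r k
  · exact abs_le_wt_half k

lemma memHs.summable_norm_D1 (hu : memHs s u) (hs : 3 / 2 < s) : Summable fun k ↦ ‖D1 u k‖ := by
  refine .of_nonneg_of_le (fun k ↦ norm_nonneg _) (fun k ↦ ?_)
    (hu.summable_wt_mul_norm (r := 1 / 2) (by linarith))
  simpa only [wt, Real.rpow_zero, one_mul, zero_add] using wt_mul_norm_D1_le 0 u k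

theorem summable_smoothedWeight_mul (hs : 2 ≤ s) (hε : ε ∈ Set.Ioc 0 1) (hu : memHs s u)
    (hv : memHs s v) (hw : memHs s w) :
    Summable fun p : ℤ × ℤ ↦ (smoothedWeight s ε ↑(-(p.1 + p.2)) : ℂ)
      * (u p.1 * D1 v p.2 * w (-(p.1 + p.2))) := by
  set r : ℝ := s / 2 - 1 with hr
  have majorant : Summable fun p : ℤ × ℤ ↦
      (wt r p.1 * ‖u p.1‖) * (wt (r + 1 / 2) p.2 * ‖v p.2‖) :=
    (hu.summable_wt_mul_norm (by linarith)).mul_of_nonneg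
      (hv.summable_wt_mul_norm (by linarith))
      (fun k ↦ mul_nonneg (wt_nonneg _ k) (norm_nonneg _))
      fun k ↦ mul_nonneg (wt_nonneg _ k) (norm_nonneg _)
  refine .of_norm_bounded (majorant.mul_left ((ε ^ 2)⁻¹ * hsNorm s w * 2 ^ r)) ?_
  rintro ⟨x, y⟩
  have hw₀ : 0 ≤ hsNorm s w := Real.sqrt_nonneg _
  have wt_neg : wt r (-(x + y)) = wt r (x + y) := by simp only [wt, Int.cast_neg, neg_sq]
  have := wt_nonneg r x
  calc ‖(smoothedWeight s ε ↑(-(x + y)) : ℂ) * (u x * D1 v y * w (-(x + y)))‖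
      = (smoothedWeight s ε ↑(-(x + y)) * ‖w (-(x + y))‖) * (‖u x‖ * ‖D1 v y‖) := by
        rw [norm_mul, norm_mul, norm_mul, Complex.norm_real,
          Real.norm_of_nonneg (smoothedWeight_nonneg _ _ _)]
        ring
    _ ≤ ((ε ^ 2)⁻¹ * hsNorm s w * (2 ^ r * (wt r x * wt r y))) * (‖u x‖ * ‖D1 v y‖) := by
        refine mul_le_mul_of_nonneg_right ((smoothedWeight_mul_norm_le hε hw _).trans ?_)
          (by positivity)
        rw [← hr, wt_neg]
        gcongr
        exact wt_add_le (by linarith) x y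
    _ = (ε ^ 2)⁻¹ * hsNorm s w * 2 ^ r * ((wt r x * ‖u x‖) * (wt r y * ‖D1 v y‖)) := by ring
    _ ≤ (ε ^ 2)⁻¹ * hsNorm s w * 2 ^ r * ((wt r x * ‖u x‖) * (wt (r + 1 / 2) y * ‖v y‖)) := by
        exact mul_le_mul_of_nonneg_left
          (mul_le_mul_of_nonneg_left (wt_mul_norm_D1_le r v y) (by positivity)) (by positivity)

theorem hsInner_T_mul_D1_eq (hs : 2 ≤ s) (hε : ε ∈ Set.Ioc 0 1) (hu : memHs s u) (hv : memHs s v)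
    (hw : memHs s w) (hreal : isReal w) :
    hsInner s (T ε (mul u (D1 v))) (T ε w)
      = (∑' p : ℤ × ℤ, (smoothedWeight s ε ↑(-(p.1 + p.2)) : ℂ)
          * (u p.1 * D1 v p.2 * w (-(p.1 + p.2)))).re := by
  let shear : ℤ × ℤ ≃ ℤ × ℤ :=
    { toFun := fun p ↦ (p.2, p.1 - p.2)
      invFun := fun p ↦ (p.1 + p.2, p.1)
      left_inv := fun p ↦ by simp
      right_inv := fun p ↦ by simp }
  rw [← shear.tsum_eq, hsInner]
  refine congrArg Complex.re (.trans (tsum_congr fun c ↦ ?_) (Summable.tsum_prod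
    (shear.summable_iff.2 (summable_smoothedWeight_mul hs hε hu hv hw))).symm)
  have inner_sum (j : ℤ) : (smoothedWeight s ε ↑(-(j + (c - j))) : ℂ)
        * (u j * D1 v (c - j) * w (-(j + (c - j))))
      = smoothedWeight s ε c * starRingEnd ℂ (w c) * (u j * D1 v (c - j)) := by
    rw [add_sub_cancel, hreal, smoothedWeight, smoothedWeight, Int.cast_neg, neg_sq]
    ring
  refine .trans ?_ (tsum_congr inner_sum).symm
  rw [tsum_mul_left]
  simp only [T, mult, mul, wt, smoothedWeight, map_mul, Complex.conj_ofReal]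
  push_cast
  rw [← inv_pow]
  ring

end Summability

section Limit

variable {s ε : ℝ} {u c : FC}

lemma tendsto_Icc_neg_atTop :
    Filter.Tendsto (fun N : ℕ ↦ Finset.Icc (-N : ℤ) N) Filter.atTop Filter.atTop := by
  refine Filter.tendsto_atTop_finset_of_monotone (fun a b hab ↦ ?_) fun k ↦ ⟨k.natAbs, ?_⟩
  · exact Finset.Icc_subset_Icc (by omega) (by omega)
  · rw [Finset.mem_Icc]
    omega

lemma tripleSum_eq_sum_filter (I : Finset ℤ) (F : ℤ → ℤ → ℤ → ℂ) :
    tripleSum I F = ∑ p ∈ I ×ˢ I with -(p.1 + p.2) ∈ I, F p.1 p.2 (-(p.1 + p.2)) := by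
  refine Finset.sum_bij' (fun q _ ↦ (q.1, q.2.1)) (fun p _ ↦ (p.1, p.2, -(p.1 + p.2)))
    ?_ ?_ ?_ ?_ ?_
  all_goals
    simp only [mem_zeroSumTriples, Finset.mem_filter, Finset.mem_product, Prod.forall,
      Prod.mk.injEq]
  · rintro x y z ⟨hx, hy, hz, h⟩
    rw [← eq_neg_of_add_eq_zero_right h]
    exact ⟨⟨hx, hy⟩, hz⟩
  · rintro x y ⟨⟨hx, hy⟩, hz⟩
    exact ⟨hx, hy, hz, add_neg_cancel _⟩
  · rintro x y z ⟨-, -, -, h⟩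
    exact ⟨trivial, trivial, (eq_neg_of_add_eq_zero_right h).symm⟩
  · rintro x y -
    trivial
  · rintro x y z ⟨-, -, -, h⟩
    rw [← eq_neg_of_add_eq_zero_right h]

lemma tendsto_tripleSum {F : ℤ → ℤ → ℤ → ℂ}
    (hF : Summable fun p : ℤ × ℤ ↦ F p.1 p.2 (-(p.1 + p.2))) :
    Filter.Tendsto (fun N : ℕ ↦ tripleSum (Finset.Icc (-N : ℤ) N) F) Filter.atTop
      (nhds (∑' p : ℤ × ℤ, F p.1 p.2 (-(p.1 + p.2)))) := by
  simp only [tripleSum_eq_sum_filter]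
  refine hF.hasSum.comp (Filter.tendsto_atTop_finset_of_monotone (fun a b hab p ↦ ?_) fun p ↦
    ⟨p.1.natAbs + p.2.natAbs, ?_⟩)
  all_goals
    simp only [Finset.mem_filter, Finset.mem_product, Finset.mem_Icc]
    omega

lemma linfty_nonneg (c : FC) : 0 ≤ linfty c :=
  Real.iSup_nonneg fun _ ↦ norm_nonneg _

lemma summable_smul_fourier (hc : Summable fun k ↦ ‖c k‖) :
    Summable fun k ↦ c k • (fourier k : C(AddCircle (2 * Real.pi), ℂ)) := by
  refine .of_norm ?_
  simpa only [norm_smul, fourier_norm, mul_one] using hc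

lemma linfty_eq_norm_tsum (hc : Summable fun k ↦ ‖c k‖) :
    linfty c = ‖∑' k, c k • (fourier k : C(AddCircle (2 * Real.pi), ℂ))‖ := by
  have eval_eq (x : ℝ) : eval c x = (∑' k, c k • fourier k : C(AddCircle (2 * Real.pi), ℂ)) x := by
    rw [eval, ← ContinuousMap.tsum_apply (summable_smul_fourier hc)]
    refine tsum_congr fun k ↦ ?_
    rw [ContinuousMap.smul_apply, fourier_coe_apply, smul_eq_mul]
    congr 2
    push_cast
    field_simp
  rw [linfty, ContinuousMap.norm_eq_iSup_norm]
  simp only [eval_eq]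
  exact QuotientAddGroup.mk_surjective.iSup_comp fun x ↦
    ‖(∑' k, c k • fourier k : C(AddCircle (2 * Real.pi), ℂ)) x‖

lemma tendsto_norm_trigPoly (hc : Summable fun k ↦ ‖c k‖) :
    Filter.Tendsto (fun N : ℕ ↦ ‖trigPoly (Finset.Icc (-N : ℤ) N) c‖) Filter.atTop
      (nhds (linfty c)) := by
  rw [linfty_eq_norm_tsum hc]
  exact ((summable_smul_fourier hc).hasSum.comp tendsto_Icc_neg_atTop).norm

lemma T_norm_sq (s ε : ℝ) (u : FC) (k : ℤ) :
    wt s k * ‖T ε u k‖ ^ 2 = smoothedWeight s ε k * ‖u k‖ ^ 2 := by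
  rw [T, mult, norm_mul, Complex.norm_real, Real.norm_eq_abs, mul_pow, sq_abs, wt, smoothedWeight,
    inv_pow, mul_assoc]

lemma memHs.T (hu : memHs s u) (ε : ℝ) : memHs s (T ε u) := by
  refine .of_nonneg_of_le (fun k ↦ mul_nonneg (wt_nonneg s k) (sq_nonneg _)) (fun k ↦ ?_) hu
  rw [T_norm_sq, smoothedWeight]
  gcongr
  exact mul_le_of_le_one_right (wt_nonneg s k) (inv_le_one_of_one_le₀
    (one_le_pow₀ (le_add_of_nonneg_right (by positivity))))

lemma energy_smoothedWeight_le (hu : memHs s u) (ε : ℝ) (I : Finset ℤ) :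
    energy (smoothedWeight s ε) I u ≤ hsNorm s (T ε u) ^ 2 := by
  simp only [hsNorm_sq, energy, ← T_norm_sq]
  exact (hu.T ε).sum_le_tsum I fun k _ ↦ mul_nonneg (wt_nonneg s k) (sq_nonneg _)

end Limit

end FC

theorem statement14_general (s : ℝ) (hs : 5 / 2 ≤ s) :
    ∃ C > (0 : ℝ), ∀ ε : ℝ, ε ∈ Set.Ioc (0 : ℝ) 1 → ∀ u : FC,
      FC.memHs s u → FC.isReal u →
      |FC.hsInner s (FC.T ε (FC.mul u (FC.D1 u))) (FC.T ε u)|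
        ≤ C * FC.linfty (FC.D1 u) * FC.hsNorm s (FC.T ε u) ^ 2 := by
  set K : ℝ := (2 * s + 4) * (2 * s + 5) + (4 * s + 8) + 4 ^ s
  have : 0 < K := by positivity
  refine ⟨30 * K ^ 6, by positivity, fun ε hε u hu hreal ↦ ?_⟩
  have hM := FC.isCommutatorWeight_smoothedWeight hs (pow_le_one₀ hε.1.le hε.2)
  have sum_tendsto := FC.tendsto_tripleSum
    (F := fun x y z ↦ (FC.smoothedWeight s ε z : ℂ) * (u x * FC.D1 u y * u z))
    (FC.summable_smoothedWeight_mul (by linarith) hε hu hu hu)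
  have sup_tendsto := FC.tendsto_norm_trigPoly (hu.summable_norm_D1 (by linarith))
  rw [FC.hsInner_T_mul_D1_eq (by linarith) hε hu hu hu hreal]
  refine (Complex.abs_re_le_norm _).trans (le_of_tendsto_of_tendsto' sum_tendsto.norm
    ((sup_tendsto.const_mul (30 * K ^ 6)).mul_const _) fun N ↦ ?_)
  exact (hM.norm_tripleSum_mul_D1_le u).trans
    (mul_le_mul_of_nonneg_left (FC.energy_smoothedWeight_le hu ε _) (by positivity))

/-- Let `s > 5/2`.  There is `C = C(s) > 0` such that for all `ε ∈ (0,1)`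
and `u ∈ H^s(𝕋)`:
`|(T̃_ε(u ∂ₓu), T̃_ε u)_{H^s}| ≤ C ‖∂ₓu‖_{L^∞} (‖u‖_{H^s} ‖T̃_ε u‖_{H^s} + ‖T̃_ε u‖²_{H^s})`. -/
theorem statement14 (s : ℝ) (hs : 5 / 2 < s) :
    ∃ C > (0 : ℝ), ∀ ε : ℝ, ε ∈ Set.Ioo (0 : ℝ) 1 → ∀ u : FC,
      FC.memHs s u → FC.isReal u →
      |FC.hsInner s (FC.T ε (FC.mul u (FC.D1 u))) (FC.T ε u)|
        ≤ C * FC.linfty (FC.D1 u)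
            * (FC.hsNorm s u * FC.hsNorm s (FC.T ε u) + FC.hsNorm s (FC.T ε u) ^ 2) := by
  obtain ⟨C, hC, bound⟩ := statement14_general s hs.le
  refine ⟨C, hC, fun ε hε u hu hreal ↦ (bound ε (Set.Ioo_subset_Ioc_self hε) u hu hreal).trans ?_⟩
  exact mul_le_mul_of_nonneg_left
    (le_add_of_nonneg_left (mul_nonneg (Real.sqrt_nonneg _) (Real.sqrt_nonneg _)))
    (mul_nonneg hC.le (FC.linfty_nonneg _))
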